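/- arXiv:1608.02792 — 2 statements merged into one kernel-verified Lean document; each statement's English description precedes it below -/
import Mathlib

section
/- Consider the Kronecker-structured dictionary learning problem with N i.i.d. observations y_n = D x_n + η_n, where the true dictionary D lies in X(D₀,r) for a fixed reference dictionary D₀ in the Kronecker dictionary class, and the coefficient vectors x_n are i.i.d. s-sparse vectors whose support is drawn either uniformly at random over all s-subsets of [p] (random sparsity) or via the separable sparsity model, and whose nonzero entries conditioned on the support S satisfy E[x_S x_Sᵀ | S] = σ_a² I_s (so that the covariance of x is (s/p)σ_a² I_p). Then for every t with 0 < t < 1 and every c₁ with 0 < c₁ < (1−t)/(8 log 2), the minimax risk satisfies ε* ≥ (t/4) · min{ p, r²/(2K), (σ² p/(4 N K s σ_a²)) · ( c₁ · (Σ_{k=1}^K (m_k − 1) p_k) − (K/2) log₂(2K) − 2 ) }. -/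
open MeasureTheory ProbabilityTheory Matrix Real
open scoped NNReal ENNReal

noncomputable section

def frobNormSq {m n : Type*} [Fintype m] [Fintype n] (A : Matrix m n ℝ) : ℝ :=
  ∑ i, ∑ j, A i j ^ 2

def frobNorm {m n : Type*} [Fintype m] [Fintype n] (A : Matrix m n ℝ) : ℝ :=
  Real.sqrt (frobNormSq A)

def kronFamily {K : ℕ} {m p : Fin K → ℕ} (D : ∀ k, Matrix (Fin (m k)) (Fin (p k)) ℝ) :
    Matrix (∀ k, Fin (m k)) (∀ k, Fin (p k)) ℝ :=
  Matrix.of fun i j => ∏ k, D k (i k) (j k)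

def hasUnitColumns {m n : Type*} [Fintype m] (A : Matrix m n ℝ) : Prop :=
  ∀ j, ∑ i, A i j ^ 2 = 1

def ksClass (K : ℕ) (m p : Fin K → ℕ) : Set (Matrix (∀ k, Fin (m k)) (∀ k, Fin (p k)) ℝ) :=
  {D | ∃ Dk : ∀ k, Matrix (Fin (m k)) (Fin (p k)) ℝ,
    (∀ k, hasUnitColumns (Dk k)) ∧ D = kronFamily Dk}

def ksBall (K : ℕ) (m p : Fin K → ℕ)
    (D0 : Matrix (∀ k, Fin (m k)) (∀ k, Fin (p k)) ℝ) (r : ℝ) :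
    Set (Matrix (∀ k, Fin (m k)) (∀ k, Fin (p k)) ℝ) :=
  {D ∈ ksClass K m p | frobNorm (D - D0) < r}

def specNorm {m n : Type*} [Fintype m] [Fintype n] [DecidableEq n] (A : Matrix m n ℝ) : ℝ :=
  ‖LinearMap.toContinuousLinearMap (Matrix.toEuclideanLin A)‖

def sampleLaw {idxM idxP : Type*} [Fintype idxM] [Fintype idxP]
    (D : Matrix idxM idxP ℝ) (ν : Measure (idxP → ℝ)) (σ : ℝ≥0) : Measure (idxM → ℝ) :=
  Measure.map (fun z : (idxP → ℝ) × (idxM → ℝ) => D.mulVec z.1 + z.2)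
    (ν.prod (Measure.pi fun _ : idxM => gaussianReal 0 (σ ^ 2)))

def obsLaw {idxM idxP : Type*} [Fintype idxM] [Fintype idxP] (N : ℕ)
    (D : Matrix idxM idxP ℝ) (ν : Measure (idxP → ℝ)) (σ : ℝ≥0) :
    Measure (Fin N → idxM → ℝ) :=
  Measure.pi fun _ : Fin N => sampleLaw D ν σ

instance matrixMeasurableSpace {m n α : Type*} [MeasurableSpace α] :
    MeasurableSpace (Matrix m n α) :=
  (inferInstance : MeasurableSpace (m → n → α))

def minimaxRisk {idxM idxP : Type*} [Fintype idxM] [Fintype idxP] (N : ℕ)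
    (ν : Measure (idxP → ℝ)) (σ : ℝ≥0) (𝒟 : Set (Matrix idxM idxP ℝ)) : ℝ≥0∞ :=
  ⨅ (est : (Fin N → idxM → ℝ) → Matrix idxM idxP ℝ) (_ : Measurable est),
    ⨆ D ∈ 𝒟, ∫⁻ Y, ENNReal.ofReal (frobNormSq (est Y - D)) ∂ obsLaw N D ν σ

/-! The supremum over the ball is at least the supremum over a cube of dictionaries, obtained by
shrinking every column of a single Kronecker factor and adding, in all sign patterns, multiples of
an orthonormal basis of its orthogonal complement that restore its unit length. Assouad's argument
bounds the risk over the cube coordinate by coordinate, as soon as the observation laws at adjacent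
vertices overlap.

The coefficient law is arbitrary, so the observation laws have no tractable densities. For adjacent
vertices `C ± H` one compares instead the laws of the pairs `(x, η ± H x)`, whose images under
`(x, y) ↦ C x + y` are the observation laws: their Cameron–Martin densities have product
`exp (-‖H x‖² / σ²)`, and since `min u v ≥ 1 + log (u v) / 2 - (u + v) / 4`, their affinity is
controlled by `𝔼 ‖H x‖²` alone, that is, by the covariance of the coefficients. Perturbing the
factor with the largest `(m k - 1) * p k`, which is at least the average over the `K` factors, gives
the rate. -/

section ProductDensity

variable {ι : Type*} [Fintype ι] {α : ι → Type*} [∀ i, MeasurableSpace (α i)]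

lemma pi_withDensity (μ : ∀ i, Measure (α i)) [∀ i, IsProbabilityMeasure (μ i)]
    {f : ∀ i, α i → ℝ≥0∞} (hf : ∀ i, Measurable (f i))
    [∀ i, SigmaFinite ((μ i).withDensity (f i))] :
    Measure.pi (fun i => (μ i).withDensity (f i)) =
      (Measure.pi μ).withDensity fun x => ∏ i, f i (x i) := by
  refine Measure.pi_eq fun s hs => ?_
  have indicator_prod (x : ∀ i, α i) :
      (Set.univ.pi s).indicator (fun x => ∏ i, f i (x i)) x =
        ∏ i, (s i).indicator (f i) (x i) := by
    by_cases hx : x ∈ Set.univ.pi s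
    · rw [Set.indicator_of_mem hx]
      exact Finset.prod_congr rfl fun i _ =>
        (Set.indicator_of_mem (hx i (Set.mem_univ i)) _).symm
    · obtain ⟨i, hi⟩ : ∃ i, x i ∉ s i := by simpa [Set.mem_pi] using hx
      rw [Set.indicator_of_notMem hx]
      exact (Finset.prod_eq_zero (Finset.mem_univ i) (Set.indicator_of_notMem hi _)).symm
  have hm (i : ι) : Measurable ((s i).indicator (f i)) := (hf i).indicator (hs i)
  rw [withDensity_apply _ (MeasurableSet.univ_pi hs),
    ← lintegral_indicator (MeasurableSet.univ_pi hs), lintegral_congr indicator_prod,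
    lintegral_prod_eq_prod_lintegral_of_indepFun (μ := Measure.pi μ) Finset.univ
      (fun i (x : ∀ i, α i) => (s i).indicator (f i) (x i))
      (iIndepFun_pi (μ := μ) (X := fun i => (s i).indicator (f i)) fun i => (hm i).aemeasurable)
      fun i => (hm i).comp (measurable_pi_apply i)]
  refine Finset.prod_congr rfl fun i _ => ?_
  rw [withDensity_apply _ (hs i), ← lintegral_indicator (hs i),
    ← (measurePreserving_eval μ i).lintegral_comp (hm i)]

lemma pi_withDensity_exp (μ : ∀ i, Measure (α i)) [∀ i, IsProbabilityMeasure (μ i)]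
    {f : ∀ i, α i → ℝ} (hf : ∀ i, Measurable (f i)) :
    Measure.pi (fun i => (μ i).withDensity fun x => ENNReal.ofReal (exp (f i x))) =
      (Measure.pi μ).withDensity fun x => ENNReal.ofReal (exp (∑ i, f i (x i))) := by
  rw [pi_withDensity μ fun i => by fun_prop]
  congr 1
  ext x
  rw [exp_sum, ENNReal.ofReal_prod_of_nonneg fun i _ => (exp_pos _).le]

end ProductDensity

section GaussianShift

variable {ι : Type*} [Fintype ι] {v : ℝ≥0}

/-- The Cameron–Martin exponent: the logarithm of the density of `N(h, v I)` with respect to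
`N(0, v I)` at the point `y`. -/
def cameronMartin (v : ℝ≥0) (h y : ι → ℝ) : ℝ :=
  ∑ i, (y i * h i / v - h i ^ 2 / (2 * v))

@[fun_prop]
lemma measurable_cameronMartin {α : Type*} [MeasurableSpace α] {h y : α → ι → ℝ}
    (hh : Measurable h) (hy : Measurable y) :
    Measurable fun x => cameronMartin v (h x) (y x) := by
  unfold cameronMartin
  fun_prop

lemma cameronMartin_add_neg (v : ℝ≥0) (h y : ι → ℝ) :
    cameronMartin v h y + cameronMartin v (-h) y = -((∑ i, h i ^ 2) / v) := by
  simp only [cameronMartin, Pi.neg_apply, ← Finset.sum_add_distrib, Finset.sum_div,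
    ← Finset.sum_neg_distrib]
  exact Finset.sum_congr rfl fun i _ => by ring

lemma gaussianReal_map_const_add_eq_withDensity (hv : v ≠ 0) (h : ℝ) :
    (gaussianReal 0 v).map (h + ·) =
      (gaussianReal 0 v).withDensity
        fun y => ENNReal.ofReal (exp (y * h / v - h ^ 2 / (2 * v))) := by
  have hv' : (v : ℝ) ≠ 0 := by exact_mod_cast hv
  rw [gaussianReal_map_const_add, zero_add, gaussianReal_of_var_ne_zero _ hv,
    gaussianReal_of_var_ne_zero _ hv,
    ← withDensity_mul _ (measurable_gaussianPDF _ _) (by fun_prop)]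
  congr 1
  ext y
  simp only [gaussianPDF, gaussianPDFReal, Pi.mul_apply]
  rw [← ENNReal.ofReal_mul (by positivity), mul_assoc _ (exp _) (exp _), ← exp_add]
  congr 3
  field

lemma pi_gaussianReal_map_const_add (hv : v ≠ 0) (h : ι → ℝ) :
    (Measure.pi fun _ : ι => gaussianReal 0 v).map (h + ·) =
      (Measure.pi fun _ : ι => gaussianReal 0 v).withDensity
        fun y => ENNReal.ofReal (exp (cameronMartin v h y)) := by
  have (i : ι) : IsProbabilityMeasure ((gaussianReal 0 v).map (h i + ·)) :=
    Measure.isProbabilityMeasure_map (by fun_prop)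
  have map_pi := Measure.pi_map_pi (μ := fun _ : ι => gaussianReal 0 v) (f := fun i y => h i + y)
    fun i => by fun_prop
  simp_rw [gaussianReal_map_const_add_eq_withDensity hv] at map_pi
  rw [pi_withDensity_exp _ fun i => by fun_prop] at map_pi
  exact map_pi

lemma prod_pi_gaussianReal_map_add {α : Type*} [MeasurableSpace α] (ν : Measure α) [SFinite ν]
    (hv : v ≠ 0) {φ : α → ι → ℝ} (hφ : Measurable φ) :
    (ν.prod (Measure.pi fun _ : ι => gaussianReal 0 v)).map (fun z => (z.1, φ z.1 + z.2)) =
      (ν.prod (Measure.pi fun _ : ι => gaussianReal 0 v)).withDensity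
        fun z => ENNReal.ofReal (exp (cameronMartin v (φ z.1) z.2)) := by
  refine Measure.ext_of_lintegral _ fun f hf => ?_
  rw [lintegral_map hf (by fun_prop), lintegral_withDensity_eq_lintegral_mul _ (by fun_prop) hf,
    lintegral_prod _ (by fun_prop), lintegral_prod _ (by fun_prop)]
  refine lintegral_congr fun x => ?_
  have hfx : Measurable fun y => f (x, y) := by fun_prop
  rw [← lintegral_map (g := (φ x + ·)) hfx (by fun_prop), pi_gaussianReal_map_const_add hv,
    lintegral_withDensity_eq_lintegral_mul _ (by fun_prop) hfx]
  rfl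

end GaussianShift

section Affinity

variable {Ω : Type*} [MeasurableSpace Ω]

lemma mul_inf_univ_le_lintegral_add (μ ν : Measure Ω) {f g : Ω → ℝ≥0∞} {c : ℝ≥0∞}
    (hf : Measurable f) (hfg : ∀ y, c ≤ f y + g y) :
    c * (μ ⊓ ν) Set.univ ≤ ∫⁻ y, f y ∂μ + ∫⁻ y, g y ∂ν :=
  calc c * (μ ⊓ ν) Set.univ
      = ∫⁻ _, c ∂(μ ⊓ ν) := (lintegral_const c).symm
    _ ≤ ∫⁻ y, f y + g y ∂(μ ⊓ ν) := lintegral_mono hfg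
    _ = ∫⁻ y, f y ∂(μ ⊓ ν) + ∫⁻ y, g y ∂(μ ⊓ ν) := lintegral_add_left hf g
    _ ≤ ∫⁻ y, f y ∂μ + ∫⁻ y, g y ∂ν :=
      add_le_add (lintegral_mono' inf_le_left le_rfl) (lintegral_mono' inf_le_right le_rfl)

lemma lintegral_min_le_inf_map_withDensity {Ω' : Type*} [MeasurableSpace Ω'] (P : Measure Ω)
    (f g : Ω → ℝ≥0∞) {φ : Ω → Ω'} (hφ : Measurable φ) :
    ∫⁻ z, min (f z) (g z) ∂P ≤
      ((P.withDensity f).map φ ⊓ (P.withDensity g).map φ) Set.univ := by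
  have map_min_le : (P.withDensity fun z => min (f z) (g z)).map φ ≤
      (P.withDensity f).map φ ⊓ (P.withDensity g).map φ :=
    le_inf (Measure.map_mono (withDensity_mono (.of_forall fun _ => min_le_left _ _)) hφ)
      (Measure.map_mono (withDensity_mono (.of_forall fun _ => min_le_right _ _)) hφ)
  calc ∫⁻ z, min (f z) (g z) ∂P
      = (P.withDensity fun z => min (f z) (g z)).map φ Set.univ := by
        rw [Measure.map_apply hφ .univ, Set.preimage_univ, withDensity_apply _ .univ,
          setLIntegral_univ]
    _ ≤ _ := map_min_le _

lemma one_add_half_add_sub_le_min_exp (A B : ℝ) :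
    1 + (A + B) / 2 - (exp A + exp B) / 4 ≤ min (exp A) (exp B) := by
  have exp_eq_sq (x : ℝ) : exp x = exp (x / 2) ^ 2 := by rw [← exp_nat_mul]; congr 1; ring
  have geom_mean : 1 + (A + B) / 2 ≤ exp (A / 2) * exp (B / 2) := by
    rw [← exp_add]
    linarith [add_one_le_exp (A / 2 + B / 2)]
  rw [exp_eq_sq A, exp_eq_sq B]
  refine le_min ?_ ?_
  · nlinarith [sq_nonneg (2 * exp (A / 2) - exp (B / 2)), sq_nonneg (exp (A / 2))]
  · nlinarith [sq_nonneg (exp (A / 2) - 2 * exp (B / 2)), sq_nonneg (exp (B / 2))]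

lemma integral_eq_one_of_isProbabilityMeasure_withDensity {P : Measure Ω} {f : Ω → ℝ}
    (hf : Measurable f) (hf0 : ∀ z, 0 ≤ f z)
    [IsProbabilityMeasure (P.withDensity fun z => ENNReal.ofReal (f z))] :
    Integrable f P ∧ ∫ z, f z ∂P = 1 := by
  have mass : ∫⁻ z, ENNReal.ofReal (f z) ∂P = 1 := by
    have := measure_univ (μ := P.withDensity fun z => ENNReal.ofReal (f z))
    rwa [withDensity_apply _ .univ, setLIntegral_univ] at this
  refine ⟨⟨hf.aestronglyMeasurable, ?_⟩, ?_⟩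
  · rw [hasFiniteIntegral_iff_ofReal (.of_forall hf0), mass]
    exact ENNReal.one_lt_top
  · rw [integral_eq_lintegral_of_nonneg_ae (.of_forall hf0) hf.aestronglyMeasurable, mass,
      ENNReal.toReal_one]

lemma ofReal_le_inf_map_withDensity_exp {Ω' : Type*} [MeasurableSpace Ω'] {P : Measure Ω}
    [IsProbabilityMeasure P] {A B : Ω → ℝ} (hA : Measurable A) (hB : Measurable B)
    [IsProbabilityMeasure (P.withDensity fun z => ENNReal.ofReal (exp (A z)))]
    [IsProbabilityMeasure (P.withDensity fun z => ENNReal.ofReal (exp (B z)))]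
    (hAB : Integrable (fun z => A z + B z) P) {φ : Ω → Ω'} (hφ : Measurable φ) :
    ENNReal.ofReal ((1 + ∫ z, A z + B z ∂P) / 2) ≤
      ((P.withDensity fun z => ENNReal.ofReal (exp (A z))).map φ ⊓
        (P.withDensity fun z => ENNReal.ofReal (exp (B z))).map φ) Set.univ := by
  obtain ⟨intA, expA⟩ := integral_eq_one_of_isProbabilityMeasure_withDensity (P := P)
    (f := fun z => exp (A z)) (by fun_prop) fun z => (exp_pos _).le
  obtain ⟨intB, expB⟩ := integral_eq_one_of_isProbabilityMeasure_withDensity (P := P)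
    (f := fun z => exp (B z)) (by fun_prop) fun z => (exp_pos _).le
  have intMin : Integrable (fun z => min (exp (A z)) (exp (B z))) P := intA.inf intB
  have affinity : (1 + ∫ z, A z + B z ∂P) / 2 ≤ ∫ z, min (exp (A z)) (exp (B z)) ∂P :=
    calc (1 + ∫ z, A z + B z ∂P) / 2
        = ∫ z, 1 + (A z + B z) / 2 - (exp (A z) + exp (B z)) / 4 ∂P := by
          rw [integral_sub (by fun_prop) (by fun_prop),
            integral_add (integrable_const 1) (hAB.div_const 2), integral_div, integral_div,
            integral_add intA intB, expA, expB]
          simp only [integral_const, probReal_univ, smul_eq_mul]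
          ring
      _ ≤ ∫ z, min (exp (A z)) (exp (B z)) ∂P :=
          integral_mono (by fun_prop) intMin fun z => one_add_half_add_sub_le_min_exp _ _
  calc ENNReal.ofReal ((1 + ∫ z, A z + B z ∂P) / 2)
      ≤ ENNReal.ofReal (∫ z, min (exp (A z)) (exp (B z)) ∂P) := ENNReal.ofReal_le_ofReal affinity
    _ = ∫⁻ z, min (ENNReal.ofReal (exp (A z))) (ENNReal.ofReal (exp (B z))) ∂P := by
        rw [ofReal_integral_eq_lintegral_ofReal intMin (.of_forall fun z => by positivity)]
        exact lintegral_congr fun z => ENNReal.ofReal_min _ _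
    _ ≤ _ := lintegral_min_le_inf_map_withDensity P _ _ hφ

end Affinity

section ObservationLaw

@[fun_prop]
lemma measurable_mulVec {I J : Type*} [Fintype J] (H : Matrix I J ℝ) : Measurable (H *ᵥ ·) := by
  unfold mulVec dotProduct
  fun_prop

variable {I J : Type*} [Fintype I] [Fintype J]

/-- The joint law of the coefficient vector and the noise vector behind one observation. -/
def latentLaw (ν : Measure (J → ℝ)) (σ : ℝ≥0) : Measure ((J → ℝ) × (I → ℝ)) :=
  ν.prod (Measure.pi fun _ => gaussianReal 0 (σ ^ 2))

/-- The log-density, with respect to the latent law, of the latent pair whose noise is shifted by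
the image under `H` of the coefficient vector. -/
def shiftLogDensity (σ : ℝ≥0) (H : Matrix I J ℝ) (z : (J → ℝ) × (I → ℝ)) : ℝ :=
  cameronMartin (σ ^ 2) (H *ᵥ z.1) z.2

variable (ν : Measure (J → ℝ)) {σ : ℝ≥0} (hσ : σ ≠ 0) (N : ℕ) (C H : Matrix I J ℝ)

instance [IsProbabilityMeasure ν] : IsProbabilityMeasure (latentLaw (I := I) ν σ) := by
  unfold latentLaw
  infer_instance

@[fun_prop]
lemma measurable_shiftLogDensity : Measurable (shiftLogDensity σ H) := by
  unfold shiftLogDensity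
  fun_prop

lemma shiftLogDensity_add_neg (z : (J → ℝ) × (I → ℝ)) :
    shiftLogDensity σ H z + shiftLogDensity σ (-H) z = -((∑ i, (H *ᵥ z.1) i ^ 2) / σ ^ 2) := by
  rw [shiftLogDensity, shiftLogDensity, neg_mulVec, cameronMartin_add_neg, NNReal.coe_pow]

include hσ

lemma latentLaw_withDensity_shift [SFinite ν] :
    ((latentLaw ν σ).withDensity fun z => ENNReal.ofReal (exp (shiftLogDensity σ H z))) =
      (latentLaw ν σ).map fun z => (z.1, H *ᵥ z.1 + z.2) :=
  (prod_pi_gaussianReal_map_add ν (pow_ne_zero 2 hσ) (by fun_prop)).symm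

lemma sampleLaw_add [SFinite ν] :
    sampleLaw (C + H) ν σ =
      ((latentLaw ν σ).withDensity fun z => ENNReal.ofReal (exp (shiftLogDensity σ H z))).map
        fun z => C *ᵥ z.1 + z.2 := by
  rw [latentLaw_withDensity_shift ν hσ, Measure.map_map (by fun_prop) (by fun_prop), sampleLaw,
    latentLaw]
  congr 1
  ext z i
  simp [add_mulVec, add_assoc]

variable [IsProbabilityMeasure ν]

lemma isProbabilityMeasure_latentLaw_withDensity :
    IsProbabilityMeasure
      ((latentLaw ν σ).withDensity fun z => ENNReal.ofReal (exp (shiftLogDensity σ H z))) := by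
  rw [latentLaw_withDensity_shift ν hσ]
  exact Measure.isProbabilityMeasure_map (by fun_prop)

lemma isProbabilityMeasure_pi_latentLaw_withDensity :
    IsProbabilityMeasure ((Measure.pi fun _ : Fin N => latentLaw ν σ).withDensity
      fun z => ENNReal.ofReal (exp (∑ n, shiftLogDensity σ H (z n)))) := by
  have := isProbabilityMeasure_latentLaw_withDensity ν hσ H
  rw [← pi_withDensity_exp _ fun _ => by fun_prop]
  infer_instance

lemma obsLaw_add :
    obsLaw N (C + H) ν σ =
      ((Measure.pi fun _ : Fin N => latentLaw ν σ).withDensity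
        fun z => ENNReal.ofReal (exp (∑ n, shiftLogDensity σ H (z n)))).map
          fun z n => C *ᵥ (z n).1 + (z n).2 := by
  have := isProbabilityMeasure_latentLaw_withDensity ν hσ H
  have (_ : Fin N) : IsProbabilityMeasure
      (((latentLaw ν σ).withDensity fun z => ENNReal.ofReal (exp (shiftLogDensity σ H z))).map
        fun z => C *ᵥ z.1 + z.2) :=
    Measure.isProbabilityMeasure_map (by fun_prop)
  rw [obsLaw, sampleLaw_add ν hσ, ← pi_withDensity_exp _ fun _ => by fun_prop]
  exact (Measure.pi_map_pi (f := fun _ (z : (J → ℝ) × (I → ℝ)) => C *ᵥ z.1 + z.2)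
    fun _ => by fun_prop).symm

end ObservationLaw

section SecondMoment

variable {I J : Type*} [Fintype I] [Fintype J] {ν : Measure (J → ℝ)} {σ : ℝ≥0} {a : ℝ}

lemma integrable_sum_comp_eval {Ω : Type*} [MeasurableSpace Ω] {μ : Measure Ω}
    [IsProbabilityMeasure μ] {f : Ω → ℝ} (hf : Integrable f μ) (N : ℕ) :
    Integrable (fun z : Fin N → Ω => ∑ n, f (z n)) (Measure.pi fun _ => μ) :=
  integrable_finsetSum _ fun _ _ => integrable_comp_eval hf

lemma integral_sum_comp_eval {Ω : Type*} [MeasurableSpace Ω] {μ : Measure Ω}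
    [IsProbabilityMeasure μ] {f : Ω → ℝ} (hf : Integrable f μ) (N : ℕ) :
    ∫ z, ∑ n, f (z n) ∂(Measure.pi fun _ : Fin N => μ) = N * ∫ x, f x ∂μ := by
  rw [integral_finsetSum _ fun _ _ => integrable_comp_eval hf]
  simp_rw [integral_comp_eval (μ := fun _ : Fin N => μ) hf.aestronglyMeasurable]
  simp

lemma integrable_sum_mulVec_sq (hint : ∀ i j, Integrable (fun x => x i * x j) ν)
    (H : Matrix I J ℝ) : Integrable (fun x => ∑ i, (H *ᵥ x) i ^ 2) ν := by
  simp only [mulVec, dotProduct, sq, Finset.sum_mul_sum, mul_mul_mul_comm]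
  fun_prop

lemma integral_sum_mulVec_sq [DecidableEq J] (hint : ∀ i j, Integrable (fun x => x i * x j) ν)
    (hcov : ∀ i j, ∫ x, x i * x j ∂ν = if i = j then a else 0) (H : Matrix I J ℝ) :
    ∫ x, ∑ i, (H *ᵥ x) i ^ 2 ∂ν = a * frobNormSq H := by
  simp only [mulVec, dotProduct, sq, Finset.sum_mul_sum, mul_mul_mul_comm]
  rw [integral_finsetSum _ fun i _ => by fun_prop, frobNormSq, Finset.mul_sum]
  refine Finset.sum_congr rfl fun i _ => ?_
  rw [integral_finsetSum _ fun j _ => by fun_prop, Finset.mul_sum]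
  refine Finset.sum_congr rfl fun j _ => ?_
  rw [integral_finsetSum _ fun k _ => by fun_prop]
  simp only [integral_const_mul, hcov, mul_ite, mul_zero, Finset.sum_ite_eq, Finset.mem_univ,
    if_true]
  ring

lemma integrable_shiftLogDensity_add_neg (hint : ∀ i j, Integrable (fun x => x i * x j) ν)
    (H : Matrix I J ℝ) :
    Integrable (fun z => shiftLogDensity σ H z + shiftLogDensity σ (-H) z) (latentLaw ν σ) := by
  simp_rw [shiftLogDensity_add_neg]
  exact (((integrable_sum_mulVec_sq hint H).comp_fst _).div_const _).neg

variable [IsProbabilityMeasure ν]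

lemma integral_shiftLogDensity_add_neg [DecidableEq J]
    (hint : ∀ i j, Integrable (fun x => x i * x j) ν)
    (hcov : ∀ i j, ∫ x, x i * x j ∂ν = if i = j then a else 0) (H : Matrix I J ℝ) :
    ∫ z, shiftLogDensity σ H z + shiftLogDensity σ (-H) z ∂latentLaw ν σ =
      -(a * frobNormSq H / σ ^ 2) := by
  simp_rw [shiftLogDensity_add_neg]
  rw [integral_neg, integral_div, latentLaw,
    integral_fun_fst fun x : J → ℝ => ∑ i, (H *ᵥ x) i ^ 2, integral_sum_mulVec_sq hint hcov H,
    probReal_univ, one_smul]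

lemma ofReal_le_obsLaw_inf_obsLaw [DecidableEq J] (hσ : σ ≠ 0)
    (hint : ∀ i j, Integrable (fun x => x i * x j) ν)
    (hcov : ∀ i j, ∫ x, x i * x j ∂ν = if i = j then a else 0) (N : ℕ) (D D' : Matrix I J ℝ) :
    ENNReal.ofReal ((1 - N * a * frobNormSq (D - D') / (4 * σ ^ 2)) / 2) ≤
      (obsLaw N D ν σ ⊓ obsLaw N D' ν σ) Set.univ := by
  let C : Matrix I J ℝ := (1 / 2 : ℝ) • (D + D')
  let H : Matrix I J ℝ := (1 / 2 : ℝ) • (D - D')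
  have hD : D = C + H := by module
  have hD' : D' = C + -H := by module
  have normSq_H : frobNormSq H = frobNormSq (D - D') / 4 := by
    simp only [H, frobNormSq, Matrix.smul_apply, smul_eq_mul, mul_pow, ← Finset.mul_sum]
    ring
  have := isProbabilityMeasure_pi_latentLaw_withDensity ν hσ N H
  have := isProbabilityMeasure_pi_latentLaw_withDensity ν hσ N (-H)
  have affinity := ofReal_le_inf_map_withDensity_exp
    (P := Measure.pi fun _ : Fin N => latentLaw ν σ)
    (A := fun z => ∑ n, shiftLogDensity σ H (z n)) (B := fun z => ∑ n, shiftLogDensity σ (-H) (z n))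
    (by fun_prop) (by fun_prop)
    (by simpa only [← Finset.sum_add_distrib] using
      integrable_sum_comp_eval (integrable_shiftLogDensity_add_neg hint H) N)
    (φ := fun z n => C *ᵥ (z n).1 + (z n).2) (by fun_prop)
  simp_rw [← Finset.sum_add_distrib] at affinity
  rw [← obsLaw_add ν hσ, ← obsLaw_add ν hσ, ← hD, ← hD',
    integral_sum_comp_eval (integrable_shiftLogDensity_add_neg hint H),
    integral_shiftLogDensity_add_neg hint hcov, normSq_H] at affinity
  convert affinity using 3
  ring

end SecondMoment

section SignCube

section Flip

variable {T : Type*} [DecidableEq T]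

/-- The neighbour across coordinate `b` of a vertex of the sign cube. -/
def flipSign (b : T) (w : T → ℤˣ) : T → ℤˣ :=
  Function.update w b (-w b)

lemma flipSign_involutive (b : T) : Function.Involutive (flipSign b) := fun w => by
  simp [flipSign]

end Flip

variable {T V : Type*} [Fintype T] [NormedAddCommGroup V] [InnerProductSpace ℝ V]

/-- The vertex indexed by the signs `w` of the cube with centre `C`, half-width `δ` and axes `E`. -/
def cubeVertex (C : V) (δ : ℝ) (E : T → V) (w : T → ℤˣ) : V :=
  C + δ • ∑ b, ((w b : ℤ) : ℝ) • E b

lemma units_int_sq_cast (u : ℤˣ) : ((u : ℤ) : ℝ) ^ 2 = 1 := by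
  rcases Int.units_eq_one_or u with rfl | rfl <;> simp

lemma norm_cubeVertex_sq {E : T → V} (hE : Orthonormal ℝ E) {C : V}
    (hC : ∀ b, inner ℝ C (E b) = 0) (δ : ℝ) (w : T → ℤˣ) :
    ‖cubeVertex C δ E w‖ ^ 2 = ‖C‖ ^ 2 + Fintype.card T * δ ^ 2 := by
  have orthogonal : inner ℝ C (δ • ∑ b, ((w b : ℤ) : ℝ) • E b) = 0 := by
    simp [real_inner_smul_right, inner_sum, hC]
  have norm_axes : ‖∑ b, ((w b : ℤ) : ℝ) • E b‖ ^ 2 = Fintype.card T := by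
    rw [← real_inner_self_eq_norm_sq, hE.inner_sum]
    simp [← sq, units_int_sq_cast]
  rw [cubeVertex, norm_add_sq_real, orthogonal, norm_smul, mul_pow, norm_axes, norm_eq_abs, sq_abs]
  ring

lemma orthonormal_inv_sqrt_smul_of_inner_map {W : Type*} [NormedAddCommGroup W]
    [InnerProductSpace ℝ W] {f : V →ₗ[ℝ] W} {c : ℝ} (hc : 0 < c)
    (hf : ∀ x y, inner ℝ (f x) (f y) = c * inner ℝ x y) {ι : Type*} {E : ι → V}
    (hE : Orthonormal ℝ E) : Orthonormal ℝ fun b => (√c)⁻¹ • f (E b) := by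
  classical
  refine orthonormal_iff_ite.2 fun b b' => ?_
  rw [real_inner_smul_left, real_inner_smul_right, hf, orthonormal_iff_ite.1 hE, ← mul_assoc,
    ← mul_inv, mul_self_sqrt hc.le, inv_mul_cancel_left₀ hc.ne']

lemma map_cubeVertex {W : Type*} [NormedAddCommGroup W] [InnerProductSpace ℝ W] (f : V →ₗ[ℝ] W)
    (c : ℝ) (C : V) (δ : ℝ) (E : T → V) (w : T → ℤˣ) :
    f (cubeVertex C (δ / c) E w) = cubeVertex (f C) δ (fun b => c⁻¹ • f (E b)) w := by
  simp only [cubeVertex, map_add, map_smul, map_sum, Finset.smul_sum, smul_smul]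
  congr! 3
  ring

variable [DecidableEq T] {E : T → V} (hE : Orthonormal ℝ E) (C : V)
  (δ : ℝ)

lemma cubeVertex_sub_cubeVertex_flipSign (E : T → V) (w : T → ℤˣ) (b : T) :
    cubeVertex C δ E w - cubeVertex C δ E (flipSign b w) = (2 * δ * (w b : ℤ)) • E b := by
  have signs_sub (b' : T) : ((w b' : ℤ) : ℝ) - (flipSign b w b' : ℤ) =
      if b' = b then 2 * ((w b : ℤ) : ℝ) else 0 := by
    rcases eq_or_ne b' b with rfl | h
    · simp [flipSign, two_mul]
    · simp [flipSign, h]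
  rw [cubeVertex, cubeVertex, add_sub_add_left_eq_sub, ← smul_sub, ← Finset.sum_sub_distrib]
  simp [← sub_smul, signs_sub, smul_smul, ← mul_assoc, mul_comm]

include hE

lemma norm_cubeVertex_sub_cubeVertex_flipSign_sq (w : T → ℤˣ) (b : T) :
    ‖cubeVertex C δ E w - cubeVertex C δ E (flipSign b w)‖ ^ 2 = 4 * δ ^ 2 := by
  rw [cubeVertex_sub_cubeVertex_flipSign, norm_smul, hE.norm_eq_one, mul_one, norm_eq_abs, sq_abs,
    mul_pow, units_int_sq_cast]
  ring

lemma two_mul_sq_le_inner_sq_add_inner_sq (w : T → ℤˣ) (b : T) (x : V) :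
    2 * δ ^ 2 ≤ inner ℝ (E b) (x - cubeVertex C δ E w) ^ 2 +
      inner ℝ (E b) (x - cubeVertex C δ E (flipSign b w)) ^ 2 := by
  have inner_sub : inner ℝ (E b) (x - cubeVertex C δ E (flipSign b w)) =
      inner ℝ (E b) (x - cubeVertex C δ E w) + 2 * δ * (w b : ℤ) := by
    rw [← sub_add_sub_cancel x (cubeVertex C δ E w), cubeVertex_sub_cubeVertex_flipSign,
      inner_add_right, real_inner_smul_right, real_inner_self_eq_norm_sq, hE.norm_eq_one]
    ring
  have sign_sq : (2 * δ * (w b : ℤ)) ^ 2 = 4 * δ ^ 2 := by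
    rw [mul_pow, units_int_sq_cast]
    ring
  rw [inner_sub]
  nlinarith [sq_nonneg (2 * inner ℝ (E b) (x - cubeVertex C δ E w) + 2 * δ * (w b : ℤ))]

end SignCube

section Assouad

variable {T V Ω : Type*} [DecidableEq T] [Fintype T] [NormedAddCommGroup V] [InnerProductSpace ℝ V]
  [MeasurableSpace V] [OpensMeasurableSpace V] [MeasurableSpace Ω]
  {E : T → V} (hE : Orthonormal ℝ E) (C : V) (δ : ℝ) {P : (T → ℤˣ) → Measure Ω} {β : ℝ≥0∞}
  {est : Ω → V} (hest : Measurable est)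

include hE hest

lemma mul_le_sum_lintegral_inner_sq {b : T}
    (hβ : ∀ w, β ≤ (P w ⊓ P (flipSign b w)) Set.univ) :
    2 ^ Fintype.card T * (ENNReal.ofReal (δ ^ 2) * β) ≤
      ∑ w, ∫⁻ y, ENNReal.ofReal (inner ℝ (E b) (est y - cubeVertex C δ E w) ^ 2) ∂P w := by
  set risk : (T → ℤˣ) → ℝ≥0∞ := fun w =>
    ∫⁻ y, ENNReal.ofReal (inner ℝ (E b) (est y - cubeVertex C δ E w) ^ 2) ∂P w
  have two_point (w : T → ℤˣ) :
      2 * (ENNReal.ofReal (δ ^ 2) * β) ≤ risk w + risk (flipSign b w) :=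
    calc 2 * (ENNReal.ofReal (δ ^ 2) * β)
        = ENNReal.ofReal (2 * δ ^ 2) * β := by
          rw [ENNReal.ofReal_mul zero_le_two, ENNReal.ofReal_ofNat, mul_assoc]
      _ ≤ ENNReal.ofReal (2 * δ ^ 2) * (P w ⊓ P (flipSign b w)) Set.univ := by gcongr; exact hβ w
      _ ≤ risk w + risk (flipSign b w) := by
          refine mul_inf_univ_le_lintegral_add _ _ ?_ fun y => ?_
          · have : Continuous fun x => inner ℝ (E b) (x - cubeVertex C δ E w) ^ 2 := by fun_prop
            exact (this.measurable.comp hest).ennreal_ofReal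
          · rw [← ENNReal.ofReal_add (by positivity) (by positivity)]
            exact ENNReal.ofReal_le_ofReal
              (two_mul_sq_le_inner_sq_add_inner_sq hE C δ w b (est y))
  have sum_flip : ∑ w, risk (flipSign b w) = ∑ w, risk w :=
    (flipSign_involutive b).bijective.sum_comp risk
  refine (ENNReal.mul_le_mul_iff_right two_ne_zero ENNReal.ofNat_ne_top).1 ?_
  calc 2 * (2 ^ Fintype.card T * (ENNReal.ofReal (δ ^ 2) * β))
      = ∑ _ : T → ℤˣ, 2 * (ENNReal.ofReal (δ ^ 2) * β) := by
        simp [mul_left_comm]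
    _ ≤ ∑ w, (risk w + risk (flipSign b w)) := Finset.sum_le_sum fun w _ => two_point w
    _ = 2 * ∑ w, risk w := by rw [Finset.sum_add_distrib, sum_flip, two_mul]

theorem assouad (hβ : ∀ w b, β ≤ (P w ⊓ P (flipSign b w)) Set.univ) :
    Fintype.card T * (ENNReal.ofReal (δ ^ 2) * β) ≤
      ⨆ w, ∫⁻ y, ENNReal.ofReal (‖est y - cubeVertex C δ E w‖ ^ 2) ∂P w := by
  set R := ⨆ w, ∫⁻ y, ENNReal.ofReal (‖est y - cubeVertex C δ E w‖ ^ 2) ∂P w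
  have bessel (w : T → ℤˣ) :
      ∑ b, ∫⁻ y, ENNReal.ofReal (inner ℝ (E b) (est y - cubeVertex C δ E w) ^ 2) ∂P w ≤ R := by
    refine le_trans ?_ (le_iSup _ w)
    rw [← lintegral_finsetSum _ fun b _ => ?_]
    · refine lintegral_mono fun y => ?_
      rw [← ENNReal.ofReal_sum_of_nonneg fun b _ => sq_nonneg _]
      exact ENNReal.ofReal_le_ofReal (by simpa using hE.sum_inner_products_le (s := Finset.univ) _)
    · have : Continuous fun x => inner ℝ (E b) (x - cubeVertex C δ E w) ^ 2 := by fun_prop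
      exact (this.measurable.comp hest).ennreal_ofReal
  refine (ENNReal.mul_le_mul_iff_right (a := 2 ^ Fintype.card T) (by simp) (by finiteness)).1 ?_
  calc 2 ^ Fintype.card T * (Fintype.card T * (ENNReal.ofReal (δ ^ 2) * β))
      = ∑ _ : T, 2 ^ Fintype.card T * (ENNReal.ofReal (δ ^ 2) * β) := by simp [mul_left_comm]
    _ ≤ ∑ b, ∑ w, ∫⁻ y, ENNReal.ofReal (inner ℝ (E b) (est y - cubeVertex C δ E w) ^ 2) ∂P w :=
        Finset.sum_le_sum fun b _ =>
          mul_le_sum_lintegral_inner_sq hE C δ hest fun w => hβ w b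
    _ = ∑ w, ∑ b, ∫⁻ y, ENNReal.ofReal (inner ℝ (E b) (est y - cubeVertex C δ E w) ^ 2) ∂P w :=
        Finset.sum_comm
    _ ≤ ∑ _ : T → ℤˣ, R := Finset.sum_le_sum fun w _ => bessel w
    _ = 2 ^ Fintype.card T * R := by simp

end Assouad

section Columns

variable {I J : Type*}

/-- A matrix seen as the family of its columns, in the Hilbert sum of Euclidean spaces whose norm
is the Frobenius norm. -/
def columns : Matrix I J ℝ ≃ₗ[ℝ] PiLp 2 fun _ : J => EuclideanSpace ℝ I where
  toFun A := WithLp.toLp 2 fun j => WithLp.toLp 2 fun i => A i j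
  invFun v := Matrix.of fun i j => v j i
  map_add' _ _ := rfl
  map_smul' _ _ := rfl

@[simp]
lemma columns_apply (A : Matrix I J ℝ) (i : I) (j : J) : columns A j i = A i j := rfl

lemma measurable_columns : Measurable (columns : Matrix I J ℝ → _) := by
  have (i : I) (j : J) : Measurable fun A : Matrix I J ℝ => A i j :=
    (measurable_pi_apply j).comp (measurable_pi_apply i)
  refine (WithLp.measurable_toLp 2 _).comp (measurable_pi_lambda _ fun j => ?_)
  exact (WithLp.measurable_toLp 2 _).comp (measurable_pi_lambda _ fun i => this i j)

variable [Fintype I]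

lemma norm_columns_apply_sq (A : Matrix I J ℝ) (j : J) : ‖columns A j‖ ^ 2 = ∑ i, A i j ^ 2 := by
  simp [EuclideanSpace.real_norm_sq_eq]

variable [Fintype J]

lemma inner_columns (A B : Matrix I J ℝ) :
    inner ℝ (columns A) (columns B) = ∑ i, ∑ j, A i j * B i j := by
  rw [PiLp.inner_apply, Finset.sum_comm]
  simp [PiLp.inner_apply, mul_comm]

lemma frobNormSq_eq_norm_columns_sq (A : Matrix I J ℝ) : frobNormSq A = ‖columns A‖ ^ 2 := by
  rw [← real_inner_self_eq_norm_sq, inner_columns]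
  simp only [frobNormSq, sq]

lemma frobNorm_eq_norm_columns (A : Matrix I J ℝ) : frobNorm A = ‖columns A‖ := by
  rw [frobNorm, frobNormSq_eq_norm_columns_sq, sqrt_sq (norm_nonneg _)]

lemma norm_columns_sq_of_hasUnitColumns {A : Matrix I J ℝ} (hA : hasUnitColumns A) :
    ‖columns A‖ ^ 2 = Fintype.card J := by
  rw [PiLp.norm_sq_eq_of_L2,
    Fintype.sum_congr _ _ fun j => (norm_columns_apply_sq A j).trans (hA j)]
  simp

theorem minimaxRisk_ge_of_cube {T : Type*} [Fintype T] [DecidableEq J]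
    {ν : Measure (J → ℝ)} [IsProbabilityMeasure ν] {σ : ℝ≥0} (hσ : σ ≠ 0) {a : ℝ}
    (hint : ∀ i j, Integrable (fun x => x i * x j) ν)
    (hcov : ∀ i j, ∫ x, x i * x j ∂ν = if i = j then a else 0) (N : ℕ)
    {𝒟 : Set (Matrix I J ℝ)} {E : T → PiLp 2 fun _ : J => EuclideanSpace ℝ I}
    (hE : Orthonormal ℝ E) {C : PiLp 2 fun _ : J => EuclideanSpace ℝ I} {δ : ℝ}
    (h𝒟 : ∀ w, columns.symm (cubeVertex C δ E w) ∈ 𝒟) :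
    ENNReal.ofReal (Fintype.card T * δ ^ 2 * (1 - N * a * δ ^ 2 / σ ^ 2) / 2) ≤
      minimaxRisk N ν σ 𝒟 := by
  classical
  let D w := columns.symm (cubeVertex C δ E w)
  have affinity (w : T → ℤˣ) (b : T) :
      ENNReal.ofReal ((1 - N * a * δ ^ 2 / σ ^ 2) / 2) ≤
        (obsLaw N (D w) ν σ ⊓ obsLaw N (D (flipSign b w)) ν σ) Set.univ := by
    refine le_trans (ENNReal.ofReal_le_ofReal (le_of_eq ?_))
      (ofReal_le_obsLaw_inf_obsLaw hσ hint hcov N _ _)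
    rw [frobNormSq_eq_norm_columns_sq, map_sub]
    simp only [D, LinearEquiv.apply_symm_apply, norm_cubeVertex_sub_cubeVertex_flipSign_sq hE]
    have : (σ : ℝ) ≠ 0 := by exact_mod_cast hσ
    field
  refine le_iInf₂ fun est hest => ?_
  calc ENNReal.ofReal (Fintype.card T * δ ^ 2 * (1 - N * a * δ ^ 2 / σ ^ 2) / 2)
      = Fintype.card T * (ENNReal.ofReal (δ ^ 2) *
          ENNReal.ofReal ((1 - N * a * δ ^ 2 / σ ^ 2) / 2)) := by
        rw [← ENNReal.ofReal_mul (by positivity), ← ENNReal.ofReal_natCast,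
          ← ENNReal.ofReal_mul (by positivity)]
        ring_nf
    _ ≤ ⨆ w, ∫⁻ Y, ENNReal.ofReal (‖columns (est Y) - cubeVertex C δ E w‖ ^ 2)
          ∂obsLaw N (D w) ν σ :=
        assouad hE C δ (measurable_columns.comp hest) affinity
    _ ≤ ⨆ D ∈ 𝒟, ∫⁻ Y, ENNReal.ofReal (frobNormSq (est Y - D)) ∂obsLaw N D ν σ := by
        refine iSup_le fun w => le_iSup₂_of_le (D w) (h𝒟 w) (le_of_eq ?_)
        simp [D, frobNormSq_eq_norm_columns_sq]

end Columns

section UnitColumns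

variable {J L V : Type*} [NormedAddCommGroup V] [InnerProductSpace ℝ V]

lemma exists_orthonormal_inner_eq_zero [Fintype L]
    (hL : Module.finrank ℝ V = Fintype.card L + 1) {v : V} (hv : v ≠ 0) :
    ∃ e : L → V, Orthonormal ℝ e ∧ ∀ l, inner ℝ v (e l) = 0 := by
  have : Fact (Module.finrank ℝ V = Fintype.card L + 1) := ⟨hL⟩
  have : FiniteDimensional ℝ V := .of_finrank_pos (by lia)
  let b := (stdOrthonormalBasis ℝ (ℝ ∙ v)ᗮ).reindex (Fintype.equivOfCardEq (β := L)
    (by simpa using Submodule.finrank_orthogonal_span_singleton hv))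
  exact ⟨fun l => b l, b.orthonormal.comp_linearIsometry (ℝ ∙ v)ᗮ.subtypeₗᵢ,
    fun l => Submodule.mem_orthogonal_singleton_iff_inner_right.1 (b l).2⟩

variable [Fintype J] [DecidableEq J] {e : J → L → V}

lemma orthonormal_piLp_single (he : ∀ j, Orthonormal ℝ (e j)) :
    Orthonormal ℝ fun q : J × L => PiLp.single 2 (β := fun _ => V) q.1 (e q.1 q.2) := by
  classical
  have inner_single (j : J) (x : V) (v : PiLp 2 fun _ : J => V) :
      inner ℝ (PiLp.single 2 j x) v = inner ℝ x (v j) := by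
    rw [PiLp.inner_apply, Finset.sum_eq_single j] <;> simp +contextual
  rw [orthonormal_iff_ite]
  rintro ⟨j, l⟩ ⟨j', l'⟩
  rw [inner_single]
  rcases eq_or_ne j j' with rfl | hj
  · simpa using orthonormal_iff_ite.1 (he j) l l'
  · simp [hj]

lemma cubeVertex_piLp_single_apply [Fintype L] (C : PiLp 2 fun _ : J => V) (δ : ℝ)
    (w : J × L → ℤˣ) (j : J) :
    cubeVertex C δ (fun q => PiLp.single 2 q.1 (e q.1 q.2)) w j =
      cubeVertex (C j) δ (e j) fun l => w (j, l) := by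
  simp [cubeVertex, Fintype.sum_prod_type, Pi.single_apply]

lemma exists_cube_hasUnitColumns {I J L : Type*} [Fintype I] [Fintype J] [Fintype L]
    (hI : Fintype.card I = Fintype.card L + 1) {A : Matrix I J ℝ} (hA : hasUnitColumns A) {κ γ : ℝ}
    (hκγ : κ ^ 2 + Fintype.card L * γ ^ 2 = 1) :
    ∃ E : J × L → PiLp 2 fun _ : J => EuclideanSpace ℝ I, Orthonormal ℝ E ∧
      ∀ w, hasUnitColumns (columns.symm (cubeVertex (κ • columns A) γ E w)) ∧
        ‖cubeVertex (κ • columns A) γ E w - columns A‖ ^ 2 = 2 * (1 - κ) * Fintype.card J := by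
  classical
  have norm_col (j : J) : ‖columns A j‖ = 1 := by
    rw [← sq_eq_sq₀ (norm_nonneg _) zero_le_one, norm_columns_apply_sq, hA j, one_pow]
  choose e he hAe using fun j : J => exists_orthonormal_inner_eq_zero (L := L)
    (finrank_euclideanSpace.trans hI) (norm_ne_zero_iff.1 (by rw [norm_col j]; exact one_ne_zero))
  have norm_col_cube (c : ℝ) (w : J × L → ℤˣ) (j : J) :
      ‖cubeVertex (c • columns A) γ (fun q => PiLp.single 2 q.1 (e q.1 q.2)) w j‖ ^ 2 =
        c ^ 2 + Fintype.card L * γ ^ 2 := by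
    rw [cubeVertex_piLp_single_apply, norm_cubeVertex_sq (he j) fun l => ?_]
    · simp [norm_smul, norm_col]
    · simp [real_inner_smul_left, hAe]
  refine ⟨_, orthonormal_piLp_single he, fun w => ⟨fun j => ?_, ?_⟩⟩
  · rw [← norm_columns_apply_sq, LinearEquiv.apply_symm_apply, norm_col_cube, hκγ]
  · have recentre : cubeVertex (κ • columns A) γ (fun q => PiLp.single 2 q.1 (e q.1 q.2)) w -
        columns A =
          cubeVertex ((κ - 1) • columns A) γ (fun q => PiLp.single 2 q.1 (e q.1 q.2)) w := by
      rw [cubeVertex, cubeVertex]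
      module
    rw [recentre, PiLp.norm_sq_eq_of_L2]
    simp only [norm_col_cube, Finset.sum_const, Finset.card_univ, nsmul_eq_mul]
    linear_combination (Fintype.card J : ℝ) * hκγ

end UnitColumns

section Kronecker

variable {K : ℕ} {m p : Fin K → ℕ}

lemma inner_columns_kronFamily (A B : ∀ k, Matrix (Fin (m k)) (Fin (p k)) ℝ) :
    inner ℝ (columns (kronFamily A)) (columns (kronFamily B)) =
      ∏ k, inner ℝ (columns (A k)) (columns (B k)) := by
  simp only [inner_columns, kronFamily, Matrix.of_apply, ← Finset.prod_mul_distrib,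
    Finset.prod_univ_sum, Fintype.piFinset_univ]

lemma kronFamily_update_apply (D : ∀ k, Matrix (Fin (m k)) (Fin (p k)) ℝ) (k : Fin K)
    (A : Matrix (Fin (m k)) (Fin (p k)) ℝ) (i : ∀ k, Fin (m k)) (j : ∀ k, Fin (p k)) :
    kronFamily (Function.update D k A) i j =
      A (i k) (j k) * ∏ k' ∈ Finset.univ.erase k, D k' (i k') (j k') := by
  rw [kronFamily, Matrix.of_apply, ← Finset.mul_prod_erase _ _ (Finset.mem_univ k),
    Function.update_self]
  congr 1
  exact Finset.prod_congr rfl fun k' hk' => by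
    rw [Function.update_of_ne (Finset.ne_of_mem_erase hk')]

/-- The Kronecker product as a linear function of its `k`-th factor, the others being those
of `D`. -/
def kronSlot (D : ∀ k, Matrix (Fin (m k)) (Fin (p k)) ℝ) (k : Fin K) :
    Matrix (Fin (m k)) (Fin (p k)) ℝ →ₗ[ℝ] Matrix (∀ k, Fin (m k)) (∀ k, Fin (p k)) ℝ where
  toFun A := kronFamily (Function.update D k A)
  map_add' A B := by
    ext i j
    simp only [Matrix.add_apply, kronFamily_update_apply, add_mul]
  map_smul' c A := by
    ext i j
    simp only [Matrix.smul_apply, kronFamily_update_apply, smul_eq_mul, mul_assoc,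
      RingHom.id_apply]

lemma kronSlot_self (D : ∀ k, Matrix (Fin (m k)) (Fin (p k)) ℝ) (k : Fin K) :
    kronSlot D k (D k) = kronFamily D :=
  congrArg kronFamily (Function.update_eq_self k D)

variable {D : ∀ k, Matrix (Fin (m k)) (Fin (p k)) ℝ} (hD : ∀ k, hasUnitColumns (D k)) (k : Fin K)

include hD

lemma kronSlot_mem_ksClass {A : Matrix (Fin (m k)) (Fin (p k)) ℝ} (hA : hasUnitColumns A) :
    kronSlot D k A ∈ ksClass K m p := by
  refine ⟨Function.update D k A, fun k' => ?_, rfl⟩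
  rcases eq_or_ne k' k with rfl | hk
  · rwa [Function.update_self]
  · rw [Function.update_of_ne hk]
    exact hD k'

lemma inner_columns_kronSlot (A B : Matrix (Fin (m k)) (Fin (p k)) ℝ) :
    inner ℝ (columns (kronSlot D k A)) (columns (kronSlot D k B)) =
      (∏ k' ∈ Finset.univ.erase k, (p k' : ℝ)) * inner ℝ (columns A) (columns B) := by
  refine (inner_columns_kronFamily _ _).trans ?_
  rw [← Finset.mul_prod_erase _ _ (Finset.mem_univ k), Function.update_self, Function.update_self,
    mul_comm]
  congr 1
  refine Finset.prod_congr rfl fun k' hk' => ?_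
  rw [Function.update_of_ne (Finset.ne_of_mem_erase hk'),
    Function.update_of_ne (Finset.ne_of_mem_erase hk'), real_inner_self_eq_norm_sq,
    norm_columns_sq_of_hasUnitColumns (hD k'), Fintype.card_fin]

lemma frobNorm_kronSlot_sub_kronFamily_sq (A : Matrix (Fin (m k)) (Fin (p k)) ℝ) :
    frobNorm (kronSlot D k A - kronFamily D) ^ 2 =
      (∏ k' ∈ Finset.univ.erase k, (p k' : ℝ)) * ‖columns A - columns (D k)‖ ^ 2 := by
  rw [← kronSlot_self D k, ← map_sub, frobNorm_eq_norm_columns, ← real_inner_self_eq_norm_sq,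
    inner_columns_kronSlot hD, real_inner_self_eq_norm_sq, map_sub]

lemma exists_cube_ksBall (hp : ∀ k, 0 < p k) (hm : 1 < m k) {r δ : ℝ} (hr : 0 < r) (hδ : 0 < δ)
    (hδP : ((m k : ℝ) - 1) * p k * δ ^ 2 < ∏ k, (p k : ℝ))
    (hδr : 2 * (((m k : ℝ) - 1) * p k * δ ^ 2) ≤ r ^ 2) :
    ∃ (C : PiLp 2 fun _ => EuclideanSpace ℝ (∀ k, Fin (m k)))
      (E : Fin (p k) × Fin (m k - 1) → PiLp 2 fun _ => EuclideanSpace ℝ (∀ k, Fin (m k))),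
      Orthonormal ℝ E ∧
        ∀ w, columns.symm (cubeVertex C δ E w) ∈ ksBall K m p (kronFamily D) r := by
  set P : ℝ := ∏ k, (p k : ℝ)
  set c : ℝ := ∏ k' ∈ Finset.univ.erase k, (p k' : ℝ)
  set x : ℝ := ((m k : ℝ) - 1) * p k * δ ^ 2 with hx
  have hpk : (0 : ℝ) < p k := by exact_mod_cast hp k
  have hc : 0 < c := Finset.prod_pos fun k' _ => by exact_mod_cast hp k'
  have hP : P = p k * c := (Finset.mul_prod_erase _ _ (Finset.mem_univ k)).symm
  have hP0 : 0 < P := hP ▸ mul_pos hpk hc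
  have hx0 : 0 < x / P := by
    have := sub_pos.2 (show (1 : ℝ) < m k by exact_mod_cast hm)
    positivity
  have hx1 : x / P < 1 := (div_lt_one hP0).2 hδP
  set κ := √(1 - x / P)
  have hκ_sq : κ ^ 2 = 1 - x / P := sq_sqrt (by linarith)
  have hκ0 : 0 < κ := sqrt_pos.2 (by linarith)
  have hκ1 : κ < 1 := by nlinarith
  have hκδ : κ ^ 2 + (m k - 1 : ℕ) * (δ / √c) ^ 2 = 1 := by
    rw [hκ_sq, hx, hP, div_pow, sq_sqrt hc.le, Nat.cast_pred (by lia)]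
    field
  obtain ⟨E, hE, hcube⟩ := exists_cube_hasUnitColumns (L := Fin (m k - 1)) (by simp; lia) (hD k)
    (κ := κ) (γ := δ / √c) (by rwa [Fintype.card_fin])
  let f := columns.toLinearMap ∘ₗ kronSlot D k ∘ₗ columns.symm.toLinearMap
  have hf (u v) : inner ℝ (f u) (f v) = c * inner ℝ u v := by
    simpa [f] using inner_columns_kronSlot hD k (columns.symm u) (columns.symm v)
  refine ⟨f (κ • columns (D k)), _, orthonormal_inv_sqrt_smul_of_inner_map hc hf hE, fun w => ?_⟩
  obtain ⟨hunit, hdist⟩ := hcube w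
  rw [← map_cubeVertex]
  simp only [f, LinearMap.comp_apply, LinearEquiv.coe_coe, LinearEquiv.symm_apply_apply]
  refine ⟨kronSlot_mem_ksClass hD k hunit, lt_of_pow_lt_pow_left₀ 2 hr.le ?_⟩
  rw [frobNorm_kronSlot_sub_kronFamily_sq hD, LinearEquiv.apply_symm_apply, hdist, Fintype.card_fin]
  calc c * (2 * (1 - κ) * p k)
      = 2 * P * (1 - κ) := by rw [hP]; ring
    _ < 2 * P * (1 - κ ^ 2) := by gcongr; exact pow_lt_self_of_lt_one₀ hκ0 hκ1 one_lt_two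
    _ = 2 * x := by rw [hκ_sq]; field
    _ ≤ r ^ 2 := hδr

end Kronecker

section MinimaxRisk

variable {K N : ℕ} {m p : Fin K → ℕ} (hp : ∀ k, 0 < p k) {σ : ℝ≥0} (hσ : 0 < σ) {r : ℝ} (hr : 0 < r)
  {D0 : Matrix (∀ k, Fin (m k)) (∀ k, Fin (p k)) ℝ} (hD0 : D0 ∈ ksClass K m p)
  {ν : Measure ((∀ k, Fin (p k)) → ℝ)} [IsProbabilityMeasure ν] {a : ℝ}
  (hint : ∀ i j, Integrable (fun x => x i * x j) ν)
  (hcov : ∀ i j, ∫ x, x i * x j ∂ν = if i = j then a else 0)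

include hp hσ hr hD0 hint hcov

lemma minimaxRisk_ksBall_ge_of_factor (k : Fin K) (hm : 1 < m k) {x : ℝ} (hx : 0 < x)
    (hxP : x < ∏ k, (p k : ℝ)) (hxr : 2 * x ≤ r ^ 2) :
    ENNReal.ofReal (x * (1 - N * a * x / (((m k : ℝ) - 1) * p k * σ ^ 2)) / 2) ≤
      minimaxRisk N ν σ (ksBall K m p D0 r) := by
  obtain ⟨D, hD, rfl⟩ := hD0
  set M : ℝ := ((m k : ℝ) - 1) * p k
  have hM0 : 0 < M :=
    mul_pos (sub_pos.2 (by exact_mod_cast hm)) (by exact_mod_cast hp k)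
  have hσ' : (σ : ℝ) ≠ 0 := by exact_mod_cast hσ.ne'
  have hδ_sq : √(x / M) ^ 2 = x / M := sq_sqrt (by positivity)
  have hδ : M * √(x / M) ^ 2 = x := by rw [hδ_sq, mul_div_cancel₀ _ hM0.ne']
  obtain ⟨C, E, hE, hball⟩ := exists_cube_ksBall hD k hp hm (δ := √(x / M)) hr (by positivity)
    (by rwa [hδ]) (by rwa [hδ])
  have hcard : (Fintype.card (Fin (p k) × Fin (m k - 1)) : ℝ) = M := by
    rw [Fintype.card_prod, Fintype.card_fin, Fintype.card_fin, Nat.cast_mul,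
      Nat.cast_pred (by lia), mul_comm]
  convert minimaxRisk_ge_of_cube hσ.ne' hint hcov N hE hball using 2
  rw [hcard, hδ_sq]
  field_simp

theorem minimax_lower_bound_sparse_general (hK : 0 < K) (ha : 0 < a) {t : ℝ} (ht0 : 0 ≤ t)
    (ht1 : t ≤ 1) :
    ENNReal.ofReal (t / 4 *
      min (∏ k, (p k : ℝ))
        (min (r ^ 2)
          (2 * (1 - t) * (σ : ℝ) ^ 2 / (N * K * a) * ∑ k, ((m k : ℝ) - 1) * (p k : ℝ)))) ≤
      minimaxRisk N ν σ (ksBall K m p D0 r) := by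
  set P : ℝ := ∏ k, (p k : ℝ)
  set S : ℝ := ∑ k, ((m k : ℝ) - 1) * (p k : ℝ)
  set rate : ℝ := 2 * (1 - t) * (σ : ℝ) ^ 2 / (N * K * a) * S
  set B : ℝ := min P (min (r ^ 2) rate)
  have hBP : B ≤ P := min_le_left _ _
  have hBr : B ≤ r ^ 2 := (min_le_right _ _).trans (min_le_left _ _)
  have hBrate : B ≤ rate := (min_le_right _ _).trans (min_le_right _ _)
  rcases le_or_gt B 0 with hB | hB
  · rw [ENNReal.ofReal_of_nonpos (mul_nonpos_of_nonneg_of_nonpos (by positivity) hB)]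
    exact zero_le
  have ht : 0 ≤ 1 - t := sub_nonneg.2 ht1
  have hS : 0 < S := pos_of_mul_pos_right (hB.trans_le hBrate) (by positivity)
  have : Nonempty (Fin K) := ⟨⟨0, hK⟩⟩
  obtain ⟨k, -, hk⟩ := Finset.exists_le_of_le_expect (f := fun k => ((m k : ℝ) - 1) * p k)
    Finset.univ_nonempty le_rfl
  rw [Fintype.expect_eq_sum_div_card, Fintype.card_fin] at hk
  have hM : 0 < ((m k : ℝ) - 1) * p k := (by positivity : 0 < S / K).trans_le hk
  have hm : 1 < m k := by
    exact_mod_cast sub_pos.1 (pos_of_mul_pos_left hM (Nat.cast_nonneg _))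
  have small : N * a * (B / 2) / (((m k : ℝ) - 1) * p k * σ ^ 2) ≤ 1 - t :=
    div_le_of_le_mul₀ (by positivity) ht <| calc
      N * a * (B / 2) ≤ N * a * (rate / 2) := by gcongr
      _ ≤ (1 - t) * (S / K * σ ^ 2) := by
        rcases N.eq_zero_or_pos with rfl | hN
        · simp only [Nat.cast_zero, zero_mul]
          positivity
        · refine le_of_eq ?_
          simp only [rate]
          field
      _ ≤ (1 - t) * (((m k : ℝ) - 1) * p k * σ ^ 2) := by gcongr
  refine le_trans (ENNReal.ofReal_le_ofReal ?_)
    (minimaxRisk_ksBall_ge_of_factor hp hσ hr hD0 hint hcov k hm (half_pos hB) (by linarith)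
      (by linarith))
  calc t / 4 * B
      = B / 2 * t / 2 := by ring
    _ ≤ _ := by gcongr; linarith

end MinimaxRisk

section RateComparison

lemma div_eight_mul_log_two_le {x : ℝ} (hx : 0 ≤ x) : x / (8 * log 2) ≤ 8 * x := by
  refine div_le_of_le_mul₀ (by positivity) (by positivity) ?_
  nlinarith [log_two_gt_d9]

lemma sparse_rate_le {K : ℕ} (hK : 0 < K) {N s P S σ σa c t : ℝ} (hN : 0 ≤ N) (hs : 0 < s)
    (hP : 0 < P) (hS : 0 ≤ S) (hct : c ≤ 8 * (1 - t)) :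
    σ ^ 2 * P / (4 * N * K * s * σa ^ 2) * (c * S - K / 2 * logb 2 (2 * K) - 2) ≤
      2 * (1 - t) * σ ^ 2 / (N * K * (s / P * σa ^ 2)) * S := by
  have : 0 ≤ (K : ℝ) / 2 * logb 2 (2 * K) :=
    mul_nonneg (by positivity)
      (logb_nonneg one_lt_two (by exact_mod_cast (show 1 ≤ 2 * K by lia)))
  calc σ ^ 2 * P / (4 * N * K * s * σa ^ 2) * (c * S - K / 2 * logb 2 (2 * K) - 2)
      ≤ σ ^ 2 * P / (4 * N * K * s * σa ^ 2) * (c * S) := by gcongr; linarith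
    _ ≤ σ ^ 2 * P / (4 * N * K * s * σa ^ 2) * (8 * (1 - t) * S) := by gcongr
    _ = 2 * (1 - t) * σ ^ 2 / (N * K * (s / P * σa ^ 2)) * S := by field_simp; ring

end RateComparison

/-- **Corollary 1** (minimax lower bound for KS dictionary learning with sparse
coefficients, under the random sparsity or the separable sparsity model). -/
theorem minimax_lower_bound_sparse
    (K N s : ℕ) (hK : 0 < K) (hs : 0 < s) (m p : Fin K → ℕ)
    (hm : ∀ k, 0 < m k) (hp : ∀ k, 0 < p k)
    (σ : ℝ≥0) (hσ : 0 < σ) (σa : ℝ) (hσa : 0 < σa) (r : ℝ) (hr : 0 < r)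
    (D0 : Matrix (∀ k, Fin (m k)) (∀ k, Fin (p k)) ℝ) (hD0 : D0 ∈ ksClass K m p)
    (ν : Measure ((∀ k, Fin (p k)) → ℝ)) [IsProbabilityMeasure ν]
    -- the coefficient vectors are `s`-sparse, with conditional second moments
    -- `𝔼[x_S x_Sᵀ | S] = σa² I_s`, and with support drawn either uniformly at random
    -- over all `s`-subsets of `[p]` or according to the separable sparsity model
    (hmix : ∃ μ : Finset (∀ k, Fin (p k)) → Measure ((∀ k, Fin (p k)) → ℝ),
      (∀ S, IsProbabilityMeasure (μ S)) ∧
      (∀ S : Finset (∀ k, Fin (p k)), S.card = s → ∀ᵐ x ∂ μ S, ∀ i ∉ S, x i = 0) ∧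
      (∀ S : Finset (∀ k, Fin (p k)), S.card = s → ∀ i ∈ S, ∀ j ∈ S,
        Integrable (fun x => x i * x j) (μ S) ∧
        ∫ x, x i * x j ∂ μ S = if i = j then σa ^ 2 else 0) ∧
      (ν = ((Fintype.card (∀ k, Fin (p k))).choose s : ℝ≥0∞)⁻¹ •
            ∑ S ∈ Finset.powersetCard s (Finset.univ : Finset (∀ k, Fin (p k))), μ S ∨
        ∃ s' : Fin K → ℕ, s = ∏ k, s' k ∧
          ν = ((∏ k, (p k).choose (s' k) : ℕ) : ℝ≥0∞)⁻¹ •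
            ∑ SS ∈ Finset.univ.filter
                (fun SS : ∀ k, Finset (Fin (p k)) => ∀ k, (SS k).card = s' k),
              μ (Fintype.piFinset SS)))
    -- so that the covariance of `x` is `(s/p) σa² I_p`
    (hint2 : ∀ i j, Integrable (fun x : (∀ k, Fin (p k)) → ℝ => x i * x j) ν)
    (hcov : ∀ i j, ∫ x, x i * x j ∂ν =
      if i = j then ((s : ℝ) / ∏ k, (p k : ℝ)) * σa ^ 2 else 0)
    (t c₁ : ℝ) (ht0 : 0 < t) (ht1 : t < 1)
    (hc0 : 0 < c₁) (hc1 : c₁ < (1 - t) / (8 * Real.log 2)) :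
    ENNReal.ofReal (t / 4 *
      min (∏ k, (p k : ℝ))
        (min (r ^ 2 / (2 * (K : ℝ)))
          ((σ : ℝ) ^ 2 * (∏ k, (p k : ℝ)) / (4 * (N : ℝ) * (K : ℝ) * (s : ℝ) * σa ^ 2) *
            (c₁ * (∑ k, ((m k : ℝ) - 1) * (p k : ℝ)) -
              (K : ℝ) / 2 * Real.logb 2 (2 * (K : ℝ)) - 2)))) ≤
      minimaxRisk N ν σ (ksBall K m p D0 r) := by
  have hP : 0 < ∏ k, (p k : ℝ) := Finset.prod_pos fun k _ => by exact_mod_cast hp k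
  have hS : 0 ≤ ∑ k, ((m k : ℝ) - 1) * (p k : ℝ) := Finset.sum_nonneg fun k _ =>
    mul_nonneg (sub_nonneg.2 (by exact_mod_cast hm k)) (Nat.cast_nonneg _)
  refine le_trans (ENNReal.ofReal_le_ofReal ?_)
    (minimax_lower_bound_sparse_general hp hσ hr hD0 hint2 hcov hK (by positivity) ht0.le ht1.le)
  gcongr ?_ * min _ (min ?_ ?_)
  · exact div_le_self (sq_nonneg r) (by exact_mod_cast (show 1 ≤ 2 * K by lia))
  · exact sparse_rate_le hK (Nat.cast_nonneg N) (Nat.cast_pos.2 hs) hP hS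
      (hc1.le.trans (div_eight_mul_log_two_le (sub_nonneg.2 ht1.le)))

end
end

section
/- Fix r > 0 and a reference dictionary D₀ = D_{0,1} ⊗ ⋯ ⊗ D_{0,K} in the Kronecker dictionary class, and assume m_k ≥ 2 for all k. Then for any t with 0 < t < 1, any c₁ with 0 < c₁ < t²/(8 log 2), and any ε' > 0 satisfying ε' < r² · min{1, r²/(2Kp)}, there exists a set D_L ⊆ X(D₀, r) of cardinality L = 2^{⌊ c₁ (Σ_{k=1}^K (m_k−1) p_k) − (K/2) log₂(2K) ⌋} such that for every pair of distinct dictionaries D_l, D_{l'} ∈ D_L one has (2p/r²)(1 − t) ε' ≤ ‖D_l − D_{l'}‖²_F ≤ (4Kp/r²) ε'. -/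
open MeasureTheory ProbabilityTheory Matrix Real
open scoped NNReal ENNReal

noncomputable section

/-! Let `α = ε' / r²` and replace each column `v` of each factor `D₀ₖ` by
`√(1-α) v + √(α/(mₖ-1)) U s`, where `U` is an orthonormal basis of `v^⊥` and `s` a vector of signs.
Kronecker products of matrices with unit columns satisfy `‖A - B‖² = 2p (1 - ∏ₖ cₖ)`, where `cₖ` is
the average inner product of corresponding columns of the `k`-th factors. For two sign patterns
`cₖ = 1 - α (1 - ρₖ)`, with `ρₖ ∈ [-1, 1]` the correlation of their `k`-th blocks, so the squared
distance is always at most `4Kpα`, and it is at least `2pα(1-t)` as soon as `|ρₖ| ≤ t` for one `k`.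
By a Chernoff bound in every block, the proportion of sign patterns for which no such `k` exists is
at most `2^K exp(-t²N/2)`, where `N = ∑ₖ (mₖ-1) pₖ`. A maximal set of pairwise separated patterns
therefore has at least `exp(t²N/2) / 2^K` elements. -/

section SignVectors

variable {ι κ : Type*}

/-- The real `±1` vector of a sign pattern. Signs are encoded as units of `ℤ`, which makes the
patterns a finite type. -/
def signVec (s : ι → ℤˣ) : ι → ℝ := fun i => ((s i : ℤ) : ℝ)

lemma signVec_mul_self (s : ι → ℤˣ) (i : ι) : signVec s i * signVec s i = 1 := by
  rcases Int.units_eq_one_or (s i) with h | h <;> simp [signVec, h]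

lemma signVec_neg (s : ι → ℤˣ) : signVec (-s) = -signVec s := by
  ext i
  simp [signVec]

variable [Fintype ι] [Fintype κ]

lemma signVec_dotProduct_self (s : ι → ℤˣ) : signVec s ⬝ᵥ signVec s = Fintype.card ι := by
  simp [dotProduct, signVec_mul_self]

lemma abs_signVec_dotProduct_le (a b : ι → ℤˣ) :
    |signVec a ⬝ᵥ signVec b| ≤ Fintype.card ι := by
  refine (Finset.abs_sum_le_sum_abs _ _).trans_eq ?_
  have h_abs (s : ι → ℤˣ) (i : ι) : |signVec s i| = 1 := by
    rcases Int.units_eq_one_or (s i) with h | h <;> simp [signVec, h]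
  simp [abs_mul, h_abs]

lemma sum_exp_signVec_dotProduct [DecidableEq ι] (a : ι → ℤˣ) (t : ℝ) :
    ∑ b, exp (t * (signVec a ⬝ᵥ signVec b)) = (2 * cosh t) ^ Fintype.card ι := by
  have h_coord (i : ι) : ∑ c : ℤˣ, exp (t * (signVec a i * ((c : ℤ) : ℝ))) = 2 * cosh t := by
    rw [cosh_eq, UnitsInt.univ, Finset.sum_pair (by decide)]
    rcases Int.units_eq_one_or (a i) with h | h <;>
    · simp only [signVec, h, Units.val_one, Units.val_neg, Int.cast_one, Int.cast_neg]
      ring_nf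
  calc ∑ b, exp (t * (signVec a ⬝ᵥ signVec b))
      = ∑ b : ι → ℤˣ, ∏ i, exp (t * (signVec a i * ((b i : ℤ) : ℝ))) := by
        simp only [dotProduct, Finset.mul_sum, exp_sum, signVec]
    _ = ∏ i, ∑ c : ℤˣ, exp (t * (signVec a i * ((c : ℤ) : ℝ))) := by
        rw [Finset.prod_univ_sum, Fintype.piFinset_univ]
    _ = (2 * cosh t) ^ Fintype.card ι := by
        simp only [h_coord, Finset.prod_const, Finset.card_univ]

lemma card_le_signVec_dotProduct_le [DecidableEq ι] {t : ℝ} (ht : 0 ≤ t) (a : ι → ℤˣ) :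
    (Finset.card {b | t * Fintype.card ι ≤ signVec a ⬝ᵥ signVec b} : ℝ) ≤
      2 ^ Fintype.card ι * exp (-(t ^ 2 / 2 * Fintype.card ι)) := by
  set n := Fintype.card ι
  have h_markov : (Finset.card {b | t * n ≤ signVec a ⬝ᵥ signVec b} : ℝ) * exp (t * (t * n)) ≤
      ∑ b, exp (t * (signVec a ⬝ᵥ signVec b)) := by
    rw [← nsmul_eq_mul]
    refine (Finset.card_nsmul_le_sum _ _ _ fun b hb => ?_).trans
      (Finset.sum_le_sum_of_subset_of_nonneg (Finset.subset_univ _) fun _ _ _ => (exp_pos _).le)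
    rw [Finset.mem_filter_univ] at hb
    exact exp_le_exp.2 (mul_le_mul_of_nonneg_left hb ht)
  have h_mgf : ∑ b, exp (t * (signVec a ⬝ᵥ signVec b)) ≤ 2 ^ n * exp (t ^ 2 / 2 * n) := by
    rw [sum_exp_signVec_dotProduct, mul_pow, mul_comm (t ^ 2 / 2), exp_nat_mul]
    gcongr
    exact cosh_le_exp_half_sq t
  calc _ ≤ 2 ^ n * exp (t ^ 2 / 2 * n) / exp (t * (t * n)) :=
        (le_div_iff₀ (exp_pos _)).2 (h_markov.trans h_mgf)
    _ = 2 ^ n * exp (-(t ^ 2 / 2 * n)) := by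
        rw [mul_div_assoc, ← exp_sub]
        ring_nf

lemma card_le_abs_signVec_dotProduct_le [DecidableEq ι] {t : ℝ} (ht : 0 ≤ t) (a : ι → ℤˣ) :
    (Finset.card {b | t * Fintype.card ι ≤ |signVec a ⬝ᵥ signVec b|} : ℝ) ≤
      2 ^ Fintype.card ι * (2 * exp (-(t ^ 2 / 2 * Fintype.card ι))) := by
  have h_pos := card_le_signVec_dotProduct_le ht a
  have h_neg := card_le_signVec_dotProduct_le ht (-a)
  simp only [signVec_neg, neg_dotProduct] at h_neg
  simp only [le_abs, Finset.filter_or]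
  refine (Nat.cast_le.2 (Finset.card_union_le _ _)).trans ?_
  push_cast
  linarith

lemma card_forall_le_abs_signVec_dotProduct_le [DecidableEq κ] {ι : κ → Type*}
    [∀ k, Fintype (ι k)] [∀ k, DecidableEq (ι k)] {t : ℝ} (ht : 0 ≤ t) (a : ∀ k, ι k → ℤˣ) :
    (Finset.card {b : ∀ k, ι k → ℤˣ |
        ∀ k, t * Fintype.card (ι k) ≤ |signVec (a k) ⬝ᵥ signVec (b k)|} : ℝ) ≤
      Fintype.card (∀ k, ι k → ℤˣ) *
        (2 ^ Fintype.card κ * exp (-(t ^ 2 / 2 * ∑ k, (Fintype.card (ι k) : ℝ)))) := by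
  have h_pi : ({b : ∀ k, ι k → ℤˣ |
        ∀ k, t * Fintype.card (ι k) ≤ |signVec (a k) ⬝ᵥ signVec (b k)|} : Finset _) =
      Fintype.piFinset fun k =>
        {b | t * Fintype.card (ι k) ≤ |signVec (a k) ⬝ᵥ signVec b|} := by
    ext b
    simp
  rw [h_pi, Fintype.card_piFinset, Nat.cast_prod]
  refine (Finset.prod_le_prod (fun _ _ => Nat.cast_nonneg _)
    fun k _ => card_le_abs_signVec_dotProduct_le ht (a k)).trans_eq ?_
  simp only [Finset.prod_mul_distrib, ← exp_sum, Finset.prod_const, Finset.card_univ,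
    Finset.sum_neg_distrib, ← Finset.mul_sum, Fintype.card_pi, Fintype.card_units_int,
    Nat.cast_prod, Nat.cast_pow, Nat.cast_ofNat]

lemma exists_pairwise_not_card_le {α : Type*} [Fintype α] {close : α → α → Prop}
    [DecidableRel close] (h_refl : ∀ x, close x x) (h_symm : ∀ x y, close x y → close y x) {M : ℝ}
    (hM : ∀ x, (Finset.card {y | close x y} : ℝ) ≤ M) :
    ∃ A : Finset α, (A : Set α).Pairwise (fun x y => ¬ close x y) ∧
      (Fintype.card α : ℝ) ≤ A.card * M := by
  classical
  obtain ⟨A, hA⟩ :=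
    (Set.toFinite {A : Finset α | (A : Set α).Pairwise fun x y => ¬ close x y}).exists_maximal
      ⟨∅, by simp⟩
  -- Gilbert–Varshamov: a point outside every neighbourhood could be added to `A`.
  have h_cover : A.biUnion (fun x => {y | close x y}) = Finset.univ := by
    refine Finset.eq_univ_iff_forall.2 fun y => ?_
    by_contra! hy
    simp only [Finset.mem_biUnion, Finset.mem_filter_univ, not_exists, not_and] at hy
    have h_insert : ((insert y A : Finset α) : Set α).Pairwise fun x y => ¬ close x y := by
      rw [Finset.coe_insert]
      exact hA.prop.insert fun x hx _ => ⟨fun h => hy x hx (h_symm _ _ h), hy x hx⟩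
    exact hy y (hA.le_of_ge h_insert (Finset.subset_insert y A) (Finset.mem_insert_self y A))
      (h_refl y)
  refine ⟨A, hA.prop, ?_⟩
  calc (Fintype.card α : ℝ) ≤ ∑ x ∈ A, (Finset.card {y | close x y} : ℝ) := by
        exact_mod_cast Finset.card_univ.symm.trans_le
          ((congrArg Finset.card h_cover).symm.trans_le Finset.card_biUnion_le)
    _ ≤ A.card * M := by
        rw [← nsmul_eq_mul]
        exact Finset.sum_le_card_nsmul A _ M fun x _ => hM x

theorem exists_sign_packing {ι : κ → Type*} [∀ k, Fintype (ι k)] {t : ℝ}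
    (ht0 : 0 ≤ t) (ht1 : t ≤ 1) :
    ∃ A : Finset (∀ k, ι k → ℤˣ),
      (A : Set (∀ k, ι k → ℤˣ)).Pairwise (fun a b =>
        ∃ k, |signVec (a k) ⬝ᵥ signVec (b k)| < t * Fintype.card (ι k)) ∧
      exp (t ^ 2 / 2 * ∑ k, (Fintype.card (ι k) : ℝ)) ≤ A.card * 2 ^ Fintype.card κ := by
  classical
  obtain ⟨A, hA, h_card⟩ := exists_pairwise_not_card_le
    (close := fun a b : ∀ k, ι k → ℤˣ =>
      ∀ k, t * Fintype.card (ι k) ≤ |signVec (a k) ⬝ᵥ signVec (b k)|)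
    (fun a k => by
      rw [signVec_dotProduct_self, Nat.abs_cast]
      exact mul_le_of_le_one_left (Nat.cast_nonneg _) ht1)
    (fun a b h k => by simpa only [dotProduct_comm] using h k)
    (card_forall_le_abs_signVec_dotProduct_le ht0)
  refine ⟨A, hA.imp fun a b h => by simpa only [not_forall, not_le] using h, ?_⟩
  have h_pos : (0 : ℝ) < Fintype.card (∀ k, ι k → ℤˣ) := Nat.cast_pos.2 Fintype.card_pos
  rw [mul_left_comm, le_mul_iff_one_le_right h_pos, ← mul_assoc, exp_neg, ← div_eq_mul_inv,
    one_le_div (exp_pos _)] at h_card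
  exact h_card

end SignVectors

lemma two_pow_floor_le_ceil {K : ℕ} (hK : 0 < K) {t c N : ℝ} (hN : 0 ≤ N)
    (hc : c ≤ t ^ 2 / (4 * log 2)) :
    2 ^ ⌊c * N - (K : ℝ) / 2 * logb 2 (2 * (K : ℝ))⌋₊ ≤ ⌈exp (t ^ 2 / 2 * N) / 2 ^ K⌉₊ := by
  set q := ⌊c * N - (K : ℝ) / 2 * logb 2 (2 * (K : ℝ))⌋₊
  obtain hq | hq_pos := Nat.eq_zero_or_pos q
  · rw [hq, pow_zero, Nat.one_le_ceil_iff]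
    positivity
  have h_logb : 1 ≤ logb 2 (2 * (K : ℝ)) := by
    rw [le_logb_iff_rpow_le one_lt_two (by positivity), rpow_one]
    exact le_mul_of_one_le_right zero_le_two (Nat.one_le_cast.2 hK)
  have hq_le : (q : ℝ) ≤ c * N - (K : ℝ) / 2 * logb 2 (2 * (K : ℝ)) :=
    Nat.floor_le (Nat.pos_of_floor_pos hq_pos).le
  -- `K/2 * logb 2 (2K) ≥ K/2` pays for half of `2 ^ K` only: hence a factor `2` in the constant.
  have h_q_add : 2 * q + K ≤ 2 * (c * N) := by
    have := le_mul_of_one_le_right (by positivity : (0 : ℝ) ≤ K / 2) h_logb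
    linarith
  have h_exponent : (q + K) * log 2 ≤ t ^ 2 / 2 * N :=
    calc (q + K) * log 2 ≤ (2 * q + K) * log 2 := by
          gcongr
          linarith [(Nat.cast_nonneg q : (0 : ℝ) ≤ q)]
      _ ≤ 2 * (c * N) * log 2 := by gcongr
      _ ≤ 2 * (t ^ 2 / (4 * log 2) * N) * log 2 := by gcongr
      _ = t ^ 2 / 2 * N := by
          field_simp
          ring
  have h_pow : (2 : ℝ) ^ q * 2 ^ K ≤ exp (t ^ 2 / 2 * N) := by
    rw [← pow_add, ← rpow_natCast, rpow_def_of_pos two_pos, mul_comm (log 2)]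
    exact exp_le_exp.2 (by exact_mod_cast h_exponent)
  have h_ceil : ((2 ^ q : ℕ) : ℝ) ≤ ⌈exp (t ^ 2 / 2 * N) / 2 ^ K⌉₊ := by
    push_cast
    exact ((le_div_iff₀ (by positivity)).2 h_pow).trans (Nat.le_ceil _)
  exact_mod_cast h_ceil

section ProductBounds

variable {ι : Type*} {s : Finset ι} {a : ι → ℝ}

lemma abs_prod_le_one (h : ∀ i ∈ s, |a i| ≤ 1) : |∏ i ∈ s, a i| ≤ 1 := by
  rw [Finset.abs_prod]
  exact Finset.prod_le_one (fun _ _ => abs_nonneg _) h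

lemma abs_prod_le_abs_of_mem (h : ∀ i ∈ s, |a i| ≤ 1) {i : ι} (hi : i ∈ s) :
    |∏ j ∈ s, a j| ≤ |a i| := by
  classical
  rw [← Finset.mul_prod_erase s a hi, abs_mul]
  exact mul_le_of_le_one_right (abs_nonneg _)
    (abs_prod_le_one fun j hj => h j (Finset.mem_of_mem_erase hj))

lemma one_sub_prod_le_sum_one_sub (h : ∀ i ∈ s, |a i| ≤ 1) :
    1 - ∏ i ∈ s, a i ≤ ∑ i ∈ s, (1 - a i) := by
  classical
  induction s using Finset.induction_on with
  | empty => simp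
  | insert i s hi ih =>
    obtain ⟨hai, hs⟩ := Finset.forall_mem_insert _ _ _ |>.1 h
    rw [Finset.prod_insert hi, Finset.sum_insert hi]
    have h_split : 0 ≤ (1 - a i) * (1 - ∏ j ∈ s, a j) :=
      mul_nonneg (sub_nonneg.2 (abs_le.1 hai).2) (sub_nonneg.2 (abs_le.1 (abs_prod_le_one hs)).2)
    linarith [ih hs]

end ProductBounds

section Correlation

variable {n q : Type*} [Fintype n]

lemma hasUnitColumns_iff {A : Matrix n q ℝ} :
    hasUnitColumns A ↔ ∀ j, A.col j ⬝ᵥ A.col j = 1 := by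
  simp only [hasUnitColumns, dotProduct, col_apply, sq]

variable [Fintype q]

lemma frobNormSq_eq_trace (A : Matrix n q ℝ) : frobNormSq A = (Aᵀ * A).trace := by
  simp only [frobNormSq, trace, diag_apply, mul_apply, transpose_apply, sq]
  exact Finset.sum_comm

lemma frobNormSq_sub (A B : Matrix n q ℝ) :
    frobNormSq (A - B) = frobNormSq A + frobNormSq B - 2 * (Aᵀ * B).trace := by
  have h_symm : (Bᵀ * A).trace = (Aᵀ * B).trace := by
    rw [← trace_transpose, transpose_mul, transpose_transpose]
  simp only [frobNormSq_eq_trace, transpose_sub, Matrix.sub_mul, Matrix.mul_sub, trace_sub, h_symm]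
  ring

lemma hasUnitColumns.frobNormSq_eq {A : Matrix n q ℝ} (hA : hasUnitColumns A) :
    frobNormSq A = Fintype.card q := by
  rw [frobNormSq, Finset.sum_comm, Finset.sum_congr rfl fun j _ => hA j]
  simp

/-- The average over `j` of the inner products of the `j`-th columns of `A` and `B`. It
measures the distance between Kronecker products of matrices with unit columns. -/
def colCorr (A B : Matrix n q ℝ) : ℝ := (Aᵀ * B).trace / Fintype.card q

lemma colCorr_eq_sum (A B : Matrix n q ℝ) :
    colCorr A B = (∑ j, A.col j ⬝ᵥ B.col j) / Fintype.card q := rfl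

lemma colCorr_eq_of_forall [Nonempty q] {A B : Matrix n q ℝ} {c : ℝ}
    (h : ∀ j, A.col j ⬝ᵥ B.col j = c) : colCorr A B = c := by
  simp [colCorr_eq_sum, h]

lemma abs_colCorr_le_one {A B : Matrix n q ℝ} (hA : hasUnitColumns A) (hB : hasUnitColumns B) :
    |colCorr A B| ≤ 1 := by
  have h_nonneg := (Nat.cast_nonneg (Fintype.card q) : (0 : ℝ) ≤ _)
  have h_col (j : q) : |A.col j ⬝ᵥ B.col j| ≤ 1 := by
    rw [← sq_le_one_iff_abs_le_one]
    simpa only [dotProduct, col_apply, hA j, hB j, mul_one] using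
      Finset.sum_mul_sq_le_sq_mul_sq Finset.univ (A.col j) (B.col j)
  rw [colCorr_eq_sum, abs_div, abs_of_nonneg h_nonneg]
  refine div_le_one_of_le₀ ((Finset.abs_sum_le_sum_abs _ _).trans ?_) h_nonneg
  simpa using Finset.sum_le_card_nsmul Finset.univ _ 1 fun j _ => h_col j

end Correlation

section Kronecker

variable {K : ℕ} {m p : Fin K → ℕ} {A B : ∀ k, Matrix (Fin (m k)) (Fin (p k)) ℝ}

lemma trace_transpose_kronFamily_mul (A B : ∀ k, Matrix (Fin (m k)) (Fin (p k)) ℝ) :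
    ((kronFamily A)ᵀ * kronFamily B).trace = ∏ k, ((A k)ᵀ * B k).trace := by
  simp only [trace, diag_apply, mul_apply, transpose_apply, kronFamily, of_apply,
    ← Finset.prod_mul_distrib, Finset.prod_univ_sum, Fintype.piFinset_univ]

lemma frobNormSq_kronFamily (A : ∀ k, Matrix (Fin (m k)) (Fin (p k)) ℝ) :
    frobNormSq (kronFamily A) = ∏ k, frobNormSq (A k) := by
  simp only [frobNormSq_eq_trace, trace_transpose_kronFamily_mul]

lemma frobNormSq_kronFamily_sub [∀ k, NeZero (p k)]
    (hA : ∀ k, hasUnitColumns (A k)) (hB : ∀ k, hasUnitColumns (B k)) :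
    frobNormSq (kronFamily A - kronFamily B) =
      2 * (∏ k, (p k : ℝ)) * (1 - ∏ k, colCorr (A k) (B k)) := by
  have h_trace (k : Fin K) : ((A k)ᵀ * B k).trace = p k * colCorr (A k) (B k) := by
    rw [colCorr, Fintype.card_fin, mul_div_cancel₀ _ (NeZero.ne _)]
  simp only [frobNormSq_sub, frobNormSq_kronFamily, trace_transpose_kronFamily_mul, h_trace,
    (hA _).frobNormSq_eq, (hB _).frobNormSq_eq, Fintype.card_fin, Finset.prod_mul_distrib]
  ring

lemma frobNormSq_kronFamily_sub_le [∀ k, NeZero (p k)]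
    (hA : ∀ k, hasUnitColumns (A k)) (hB : ∀ k, hasUnitColumns (B k))
    {δ : ℝ} (hδ : ∀ k, 1 - δ ≤ colCorr (A k) (B k)) :
    frobNormSq (kronFamily A - kronFamily B) ≤ 2 * (∏ k, (p k : ℝ)) * (K * δ) := by
  rw [frobNormSq_kronFamily_sub hA hB]
  gcongr
  calc _ ≤ ∑ k, (1 - colCorr (A k) (B k)) :=
        one_sub_prod_le_sum_one_sub fun k _ => abs_colCorr_le_one (hA k) (hB k)
    _ ≤ ∑ _k : Fin K, δ := by
        gcongr with k
        linarith [hδ k]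
    _ = K * δ := by simp

lemma le_frobNormSq_kronFamily_sub [∀ k, NeZero (p k)]
    (hA : ∀ k, hasUnitColumns (A k)) (hB : ∀ k, hasUnitColumns (B k))
    {δ : ℝ} {k : Fin K} (hδ : |colCorr (A k) (B k)| ≤ 1 - δ) :
    2 * (∏ k, (p k : ℝ)) * δ ≤ frobNormSq (kronFamily A - kronFamily B) := by
  rw [frobNormSq_kronFamily_sub hA hB]
  gcongr
  have := abs_prod_le_abs_of_mem (fun k _ => abs_colCorr_le_one (hA k) (hB k))
    (Finset.mem_univ k)
  linarith [le_abs_self (∏ k, colCorr (A k) (B k))]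

end Kronecker

section TiltedColumns

variable {n q l : Type*} [Fintype l]

/-- The columns of `U` are an orthonormal family orthogonal to `v`; these are the directions in
which the column `v` of a dictionary is perturbed. -/
structure IsOrthonormalCompl [Fintype n] [DecidableEq l] (v : n → ℝ) (U : Matrix n l ℝ) : Prop where
  transpose_mul_self : Uᵀ * U = 1
  vecMul_eq_zero : v ᵥ* U = 0

lemma exists_isOrthonormalCompl [Fintype n] {d : ℕ} (hd : Fintype.card n = d + 1) {v : n → ℝ}
    (hv : v ≠ 0) :
    ∃ U : Matrix n (Fin d) ℝ, IsOrthonormalCompl v U := by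
  have : Fact (Module.finrank ℝ (EuclideanSpace ℝ n) = d + 1) := ⟨by simp [hd]⟩
  have hv' : WithLp.toLp 2 v ≠ 0 := by simpa using hv
  let basis := OrthonormalBasis.fromOrthogonalSpanSingleton (𝕜 := ℝ) d hv'
  refine ⟨of fun i x => (basis x : EuclideanSpace ℝ n) i, ?_, ?_⟩
  · ext x y
    simpa [mul_apply, PiLp.inner_apply, one_apply, mul_comm] using
      orthonormal_iff_ite.1 basis.orthonormal x y
  · ext x
    simpa [vecMul, dotProduct, PiLp.inner_apply, mul_comm] using
      Submodule.mem_orthogonal_singleton_iff_inner_right.1 (basis x).2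

lemma IsOrthonormalCompl.dotProduct_eq [Fintype n] [DecidableEq l] {v : n → ℝ} {U : Matrix n l ℝ}
    (hU : IsOrthonormalCompl v U) (hv : v ⬝ᵥ v = 1) (x y x' y' : ℝ) (b b' : l → ℝ) :
    (x • v + y • U *ᵥ b) ⬝ᵥ (x' • v + y' • U *ᵥ b') = x * x' + y * y' * (b ⬝ᵥ b') := by
  have h_orth (b : l → ℝ) : v ⬝ᵥ U *ᵥ b = 0 := by
    rw [dotProduct_mulVec, hU.vecMul_eq_zero, zero_dotProduct]
  have h_isometry : U *ᵥ b ⬝ᵥ U *ᵥ b' = b ⬝ᵥ b' := by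
    rw [dotProduct_mulVec, vecMul_mulVec, hU.transpose_mul_self, vecMul_one]
  simp only [add_dotProduct, dotProduct_add, smul_dotProduct, dotProduct_smul, smul_eq_mul, hv,
    h_orth, h_isometry, dotProduct_comm (U *ᵥ b) v]
  ring

/-- The perturbed dictionary in which each column `v` of `D` is tilted to `√(1-α) v + √(α/d) U s`;
here `U = U j` is the frame of `v^⊥` attached to the column, `d` the number of vectors in it, and
`s = s (j, ·)` a sign vector. The dictionaries of the packing have such factors. -/
def tilt (α : ℝ) (D : Matrix n q ℝ) (U : q → Matrix n l ℝ) (s : q × l → ℤˣ) : Matrix n q ℝ :=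
  of fun i j => (√(1 - α) • D.col j +
    √(α / Fintype.card l) • U j *ᵥ signVec fun x => s (j, x)) i

variable {α : ℝ} {D : Matrix n q ℝ} {U : q → Matrix n l ℝ}

lemma col_tilt (s : q × l → ℤˣ) (j : q) : (tilt α D U s).col j =
    √(1 - α) • D.col j + √(α / Fintype.card l) • U j *ᵥ signVec fun x => s (j, x) := rfl

variable [Fintype n] [DecidableEq l]
  (hD : hasUnitColumns D) (hU : ∀ j, IsOrthonormalCompl (D.col j) (U j))

include hD hU

lemma col_tilt_dotProduct_col_tilt (hα0 : 0 ≤ α) (hα1 : α ≤ 1) (s s' : q × l → ℤˣ) (j : q) :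
    (tilt α D U s).col j ⬝ᵥ (tilt α D U s').col j = 1 - α + α / Fintype.card l *
      ((signVec fun x => s (j, x)) ⬝ᵥ signVec fun x => s' (j, x)) := by
  rw [col_tilt, col_tilt, (hU j).dotProduct_eq (hasUnitColumns_iff.1 hD j),
    mul_self_sqrt (sub_nonneg.2 hα1), mul_self_sqrt (by positivity)]

lemma hasUnitColumns_tilt [Nonempty l] (hα0 : 0 ≤ α) (hα1 : α ≤ 1) (s : q × l → ℤˣ) :
    hasUnitColumns (tilt α D U s) := by
  rw [hasUnitColumns_iff]
  intro j
  rw [col_tilt_dotProduct_col_tilt hD hU hα0 hα1, signVec_dotProduct_self,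
    div_mul_cancel₀ _ (Nat.cast_ne_zero.2 Fintype.card_ne_zero), sub_add_cancel]

variable [Fintype q] [Nonempty q]

lemma colCorr_tilt_self (s : q × l → ℤˣ) : colCorr (tilt α D U s) D = √(1 - α) := by
  refine colCorr_eq_of_forall fun j => ?_
  simpa [col_tilt] using (hU j).dotProduct_eq (hasUnitColumns_iff.1 hD j) (√(1 - α))
    (√(α / Fintype.card l)) 1 0 (signVec fun x => s (j, x)) 0

lemma colCorr_tilt_tilt [Nonempty l] (hα0 : 0 ≤ α) (hα1 : α ≤ 1) (s s' : q × l → ℤˣ) :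
    colCorr (tilt α D U s) (tilt α D U s') =
      1 - α * (1 - signVec s ⬝ᵥ signVec s' / Fintype.card (q × l)) := by
  have h_sum : ∑ j, (signVec fun x => s (j, x)) ⬝ᵥ (signVec fun x => s' (j, x)) =
      signVec s ⬝ᵥ signVec s' :=
    (Fintype.sum_prod_type fun x => signVec s x * signVec s' x).symm
  simp only [colCorr_eq_sum, col_tilt_dotProduct_col_tilt hD hU hα0 hα1, Finset.sum_add_distrib,
    ← Finset.mul_sum, h_sum, Finset.sum_const, Finset.card_univ, nsmul_eq_mul,
    Fintype.card_prod, Nat.cast_mul]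
  field_simp
  ring

lemma one_sub_le_colCorr_tilt_tilt [Nonempty l] (hα0 : 0 ≤ α) (hα1 : α ≤ 1)
    (s s' : q × l → ℤˣ) : 1 - 2 * α ≤ colCorr (tilt α D U s) (tilt α D U s') := by
  have h_card : (0 : ℝ) < Fintype.card (q × l) := Nat.cast_pos.2 Fintype.card_pos
  have h_ratio : -1 ≤ signVec s ⬝ᵥ signVec s' / Fintype.card (q × l) := by
    rw [le_div_iff₀ h_card, neg_one_mul]
    exact (abs_le.1 (abs_signVec_dotProduct_le s s')).1
  rw [colCorr_tilt_tilt hD hU hα0 hα1]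
  linarith [mul_le_mul_of_nonneg_left h_ratio hα0]

lemma abs_colCorr_tilt_tilt_le [Nonempty l] (hα0 : 0 ≤ α) (hα1 : α ≤ 1) {t : ℝ}
    {s s' : q × l → ℤˣ} (h : |signVec s ⬝ᵥ signVec s'| ≤ t * Fintype.card (q × l)) :
    |colCorr (tilt α D U s) (tilt α D U s')| ≤ 1 - α * (1 - t) := by
  have h_card : (0 : ℝ) < Fintype.card (q × l) := Nat.cast_pos.2 Fintype.card_pos
  have h_ratio : |signVec s ⬝ᵥ signVec s' / Fintype.card (q × l)| ≤ t := by
    rwa [abs_div, Nat.abs_cast, div_le_iff₀ h_card]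
  rw [colCorr_tilt_tilt hD hU hα0 hα1]
  calc _ = |(1 - α) + α * (signVec s ⬝ᵥ signVec s' / Fintype.card (q × l))| := by ring_nf
    _ ≤ (1 - α) + α * t := by
        refine (abs_add_le _ _).trans ?_
        rw [abs_of_nonneg (sub_nonneg.2 hα1), abs_mul, abs_of_nonneg hα0]
        gcongr
    _ = 1 - α * (1 - t) := by ring

end TiltedColumns

theorem exists_kronFamily_packing {K : ℕ} {m p : Fin K → ℕ} [∀ k, NeZero (p k)]
    (hm : ∀ k, 2 ≤ m k) {D : ∀ k, Matrix (Fin (m k)) (Fin (p k)) ℝ}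
    (hD : ∀ k, hasUnitColumns (D k)) {α t : ℝ} (hα0 : 0 < α) (hα1 : α ≤ 1)
    (ht0 : 0 ≤ t) (ht1 : t < 1) :
    ∃ DL : Finset (Matrix (∀ k, Fin (m k)) (∀ k, Fin (p k)) ℝ),
      (∀ D' ∈ DL, D' ∈ ksClass K m p ∧
        frobNormSq (D' - kronFamily D) ≤ 2 * (∏ k, (p k : ℝ)) * (K * α)) ∧
      exp (t ^ 2 / 2 * ∑ k, ((m k : ℝ) - 1) * (p k : ℝ)) ≤ DL.card * 2 ^ K ∧
      (DL : Set (Matrix (∀ k, Fin (m k)) (∀ k, Fin (p k)) ℝ)).Pairwise fun D₁ D₂ =>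
        2 * (∏ k, (p k : ℝ)) * (α * (1 - t)) ≤ frobNormSq (D₁ - D₂) ∧
        frobNormSq (D₁ - D₂) ≤ 2 * (∏ k, (p k : ℝ)) * (K * (2 * α)) := by
  classical
  have (k : Fin K) : NeZero (m k - 1) := ⟨by have := hm k; omega⟩
  have h_col_ne (k : Fin K) (j : Fin (p k)) : (D k).col j ≠ 0 := fun h => by
    simpa [h] using hasUnitColumns_iff.1 (hD k) j
  choose U hU using fun k j => exists_isOrthonormalCompl (d := m k - 1)
    (by have := hm k; rw [Fintype.card_fin]; omega) (h_col_ne k j)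
  obtain ⟨A, hA, h_card⟩ :=
    exists_sign_packing (ι := fun k => Fin (p k) × Fin (m k - 1)) ht0 ht1.le
  let dict (s : ∀ k, Fin (p k) × Fin (m k - 1) → ℤˣ) := kronFamily fun k => tilt α (D k) (U k) (s k)
  have h_unit (s : ∀ k, Fin (p k) × Fin (m k - 1) → ℤˣ) (k : Fin K) :
      hasUnitColumns (tilt α (D k) (U k) (s k)) :=
    hasUnitColumns_tilt (hD k) (hU k) hα0.le hα1 (s k)
  have h_far : (A : Set (∀ k, Fin (p k) × Fin (m k - 1) → ℤˣ)).Pairwise fun s s' =>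
      2 * (∏ k, (p k : ℝ)) * (α * (1 - t)) ≤ frobNormSq (dict s - dict s') :=
    hA.imp fun s s' ⟨k, hk⟩ => le_frobNormSq_kronFamily_sub (h_unit s) (h_unit s')
      (abs_colCorr_tilt_tilt_le (hD k) (hU k) hα0.le hα1 hk.le)
  have h_inj : Set.InjOn dict A := fun s hs s' hs' h_eq => by
    by_contra h_ne
    have h_dist := h_far hs hs' h_ne
    have h_zero : frobNormSq (dict s - dict s') = 0 := by simp [h_eq, frobNormSq]
    have h_prod : 0 < ∏ k, (p k : ℝ) := Finset.prod_pos fun k _ => Nat.cast_pos.2 (NeZero.pos _)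
    have h_gap : 0 < 2 * (∏ k, (p k : ℝ)) * (α * (1 - t)) :=
      mul_pos (by positivity) (mul_pos hα0 (sub_pos.2 ht1))
    linarith
  refine ⟨A.image dict, Finset.forall_mem_image.2 fun s _ => ⟨⟨_, h_unit s, rfl⟩, ?_⟩, ?_, ?_⟩
  · refine frobNormSq_kronFamily_sub_le (h_unit s) hD fun k => ?_
    rw [colCorr_tilt_self (hD k) (hU k)]
    exact le_sqrt_of_sq_le (pow_le_of_le_one (sub_nonneg.2 hα1) (sub_le_self 1 hα0.le) two_ne_zero)
  · rw [Finset.card_image_of_injOn h_inj]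
    convert h_card using 4 with k
    · simp [Nat.cast_sub (one_le_two.trans (hm _)), mul_comm]
    · simp
  · rw [Finset.coe_image]
    rintro _ ⟨s, hs, rfl⟩ _ ⟨s', hs', rfl⟩ h_ne
    exact ⟨h_far hs hs' (ne_of_apply_ne dict h_ne), frobNormSq_kronFamily_sub_le (h_unit s)
      (h_unit s') fun k => one_sub_le_colCorr_tilt_tilt (hD k) (hU k) hα0.le hα1 _ _⟩

theorem ks_dictionary_packing_general
    (K : ℕ) (hK : 0 < K) (m p : Fin K → ℕ) (hm : ∀ k, 2 ≤ m k) (hp : ∀ k, 0 < p k)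
    (r : ℝ) (hr : 0 < r)
    (D0k : ∀ k, Matrix (Fin (m k)) (Fin (p k)) ℝ)
    (hD0k : ∀ k, hasUnitColumns (D0k k))
    (t ε' : ℝ) (ht0 : 0 ≤ t) (ht1 : t < 1)
    (hε0 : 0 < ε')
    (hε : ε' < r ^ 2 * min 1 (r ^ 2 / (2 * (K : ℝ) * ∏ k, (p k : ℝ))))
    (L : ℕ) (hL : L ≤ ⌈exp (t ^ 2 / 2 * ∑ k, ((m k : ℝ) - 1) * (p k : ℝ)) / 2 ^ K⌉₊) :
    ∃ DL : Finset (Matrix (∀ k, Fin (m k)) (∀ k, Fin (p k)) ℝ),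
      ↑DL ⊆ ksBall K m p (kronFamily D0k) r ∧
      DL.card = L ∧
      ∀ D₁ ∈ DL, ∀ D₂ ∈ DL, D₁ ≠ D₂ →
        2 * (∏ k, (p k : ℝ)) / r ^ 2 * (1 - t) * ε' ≤ frobNormSq (D₁ - D₂) ∧
        frobNormSq (D₁ - D₂) ≤ 4 * (K : ℝ) * (∏ k, (p k : ℝ)) / r ^ 2 * ε' := by
  have (k : Fin K) : NeZero (p k) := ⟨(hp k).ne'⟩
  have h_prod : 0 < ∏ k, (p k : ℝ) := Finset.prod_pos fun k _ => Nat.cast_pos.2 (hp k)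
  have hα : ε' / r ^ 2 < min 1 (r ^ 2 / (2 * (K : ℝ) * ∏ k, (p k : ℝ))) :=
    (div_lt_iff₀' (by positivity)).2 hε
  obtain ⟨hα1, hαr⟩ := lt_min_iff.1 hα
  rw [lt_div_iff₀ (by positivity)] at hαr
  obtain ⟨A, hA_ball, hA_card, hA_dist⟩ :=
    exists_kronFamily_packing hm hD0k (by positivity : 0 < ε' / r ^ 2) hα1.le ht0 ht1
  have hLA : L ≤ A.card := hL.trans (Nat.ceil_le.2 ((div_le_iff₀ (by positivity)).2 hA_card))
  obtain ⟨B, hBA, hB_card⟩ := Finset.exists_subset_card_eq hLA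
  refine ⟨B, fun D' hD' => ?_, hB_card, fun D₁ h₁ D₂ h₂ h_ne => ?_⟩
  · obtain ⟨h_class, h_near⟩ := hA_ball D' (hBA hD')
    refine ⟨h_class, (sqrt_lt' hr).2 (h_near.trans_lt ?_)⟩
    linarith
  · convert hA_dist (hBA h₁) (hBA h₂) h_ne using 2 <;> ring

/-- **Lemma 2** (construction of a packing of the KS dictionary class): there exists a
set of `2^⌊c₁ Σ_k (m_k - 1) p_k - (K/2) log₂(2K)⌋` dictionaries in `X(D₀, r)` whose
pairwise squared Frobenius distances are between `(2p/r²)(1-t)ε'` and `(4Kp/r²)ε'`. -/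
theorem ks_dictionary_packing
    (K : ℕ) (hK : 0 < K) (m p : Fin K → ℕ) (hm : ∀ k, 2 ≤ m k) (hp : ∀ k, 0 < p k)
    (r : ℝ) (hr : 0 < r)
    (D0k : ∀ k, Matrix (Fin (m k)) (Fin (p k)) ℝ)
    (hD0k : ∀ k, hasUnitColumns (D0k k))
    (t c₁ ε' : ℝ) (ht0 : 0 < t) (ht1 : t < 1)
    (hc0 : 0 < c₁) (hc1 : c₁ < t ^ 2 / (8 * Real.log 2))
    (hε0 : 0 < ε')
    (hε : ε' < r ^ 2 * min 1 (r ^ 2 / (2 * (K : ℝ) * ∏ k, (p k : ℝ)))) :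
    ∃ DL : Finset (Matrix (∀ k, Fin (m k)) (∀ k, Fin (p k)) ℝ),
      ↑DL ⊆ ksBall K m p (kronFamily D0k) r ∧
      DL.card = 2 ^ ⌊c₁ * (∑ k, ((m k : ℝ) - 1) * (p k : ℝ)) -
        (K : ℝ) / 2 * Real.logb 2 (2 * (K : ℝ))⌋₊ ∧
      ∀ D₁ ∈ DL, ∀ D₂ ∈ DL, D₁ ≠ D₂ →
        2 * (∏ k, (p k : ℝ)) / r ^ 2 * (1 - t) * ε' ≤ frobNormSq (D₁ - D₂) ∧
        frobNormSq (D₁ - D₂) ≤ 4 * (K : ℝ) * (∏ k, (p k : ℝ)) / r ^ 2 * ε' := by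
  have hc : c₁ ≤ t ^ 2 / (4 * log 2) := hc1.le.trans (by gcongr; norm_num)
  have hN : 0 ≤ ∑ k, ((m k : ℝ) - 1) * (p k : ℝ) := Finset.sum_nonneg fun k _ =>
    mul_nonneg (sub_nonneg.2 (Nat.one_le_cast.2 (one_le_two.trans (hm k)))) (Nat.cast_nonneg _)
  exact ks_dictionary_packing_general K hK m p hm hp r hr D0k hD0k t ε' ht0.le ht1 hε0 hε _
    (two_pow_floor_le_ceil hK hN hc)

end
end
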